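/- arXiv:1905.03588 — 6 statements merged into one kernel-verified Lean document; each statement's English description precedes it below -/
import Mathlib

section
/- If a concurrent game G with a reachability objective is R-concurrent for a transducer R that admits local determinacy, then G is determined at every vertex: from every vertex, either Player 1 or Player 2 has a winning strategy in G. -/
/-!
Let `W` be the set of vertices from which Player 1 wins the turn-based game in which he reveals
his action first. Inside `W`, Player 1's strategy also wins the concurrent game, since an opponent
who does not see the current action is a special case of one who does. Outside `W`, local
determinacy (applicable because reachability objectives are Borel) supplies an action of Player 2
that keeps the play outside `W`; playing it positionally forever avoids `T`, because a vertex
of `T` is trivially in `W`.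
-/

/-! # Concurrent games on graphs -/

namespace Conc

/-- A concurrent game `⟨A, V, λ, δ, α⟩`: a finite action set `A`, vertices `V`,
nonempty sets of allowed actions for each player at each vertex, a transition
function and an objective for Player 1 (Player 1 is indexed by `0 : Fin 2`,
Player 2 by `1 : Fin 2`). -/
structure Game (A V : Type) where
  allowed : V → Fin 2 → Set A
  allowed_nonempty : ∀ v i, (allowed v i).Nonempty
  trans : V → A → A → V
  obj : (ℕ → V) → Prop

/-- A finite history: the sequence of visited vertices together with the
actions chosen by the two players there. -/
abbrev Hist (A V : Type) := List (V × A × A)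

/-- A (pure) strategy maps a history and the current vertex to an action. -/
abbrev Strategy (A V : Type) := Hist A V → V → A

/-- A strategy is legal for Player `i` if it always chooses allowed actions. -/
def Legal {A V : Type} (G : Game A V) (i : Fin 2) (σ : Strategy A V) : Prop :=
  ∀ h v, σ h v ∈ G.allowed v i

/-- The play (history and current vertex after `n` rounds) determined by two
strategies from an initial vertex. -/
def playAux {A V : Type} (G : Game A V) (σ1 σ2 : Strategy A V) (v0 : V) :
    ℕ → Hist A V × V
  | 0 => ([], v0)
  | n + 1 =>
    let p := playAux G σ1 σ2 v0 n
    let a1 := σ1 p.1 p.2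
    let a2 := σ2 p.1 p.2
    (p.1 ++ [(p.2, a1, a2)], G.trans p.2 a1 a2)

/-- The vertex path of the play determined by two strategies. -/
def path {A V : Type} (G : Game A V) (σ1 σ2 : Strategy A V) (v0 : V) (n : ℕ) : V :=
  (playAux G σ1 σ2 v0 n).2

/-- Player `i` wins the play with vertex path `p`. -/
def WinsPath {A V : Type} (G : Game A V) (i : Fin 2) (p : ℕ → V) : Prop :=
  if i = 0 then G.obj p else ¬ G.obj p

/-- `σ` is a winning strategy for Player `i` at `v` in the concurrent game `G`. -/
def WinningStrat {A V : Type} (G : Game A V) (i : Fin 2) (σ : Strategy A V) (v : V) : Prop :=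
  Legal G i σ ∧ ∀ τ : Strategy A V, Legal G (1 - i) τ →
    WinsPath G i (if i = 0 then path G σ τ v else path G τ σ v)

/-- `G` is determined at `v`: some player has a winning strategy at `v`. -/
def Determined {A V : Type} (G : Game A V) (v : V) : Prop :=
  (∃ σ, WinningStrat G 0 σ v) ∨ (∃ σ, WinningStrat G 1 σ v)

/-! ## The turn-based game `G_i` in which Player `i` reveals his action first.
A strategy of the opponent in `G_i` may additionally depend on the action just
revealed by Player `i` at the current vertex. -/

/-- A responding strategy: it sees the history, the current vertex, and the
action revealed first by the other player. -/
abbrev RespStrategy (A V : Type) := Hist A V → V → A → A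

def RespLegal {A V : Type} (G : Game A V) (i : Fin 2) (τ : RespStrategy A V) : Prop :=
  ∀ h v a, τ h v a ∈ G.allowed v i

/-- The play in `G_i`: Player `i` (using `σ`) reveals his action first, then
Player `3-i` (using `τ`) responds. -/
def playFirstAux {A V : Type} (G : Game A V) (i : Fin 2) (σ : Strategy A V)
    (τ : RespStrategy A V) (v0 : V) : ℕ → Hist A V × V
  | 0 => ([], v0)
  | n + 1 =>
    let p := playFirstAux G i σ τ v0 n
    let a := σ p.1 p.2
    let b := τ p.1 p.2 a
    let a1 := if i = 0 then a else b
    let a2 := if i = 0 then b else a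
    (p.1 ++ [(p.2, a1, a2)], G.trans p.2 a1 a2)

def pathFirst {A V : Type} (G : Game A V) (i : Fin 2) (σ : Strategy A V)
    (τ : RespStrategy A V) (v0 : V) (n : ℕ) : V :=
  (playFirstAux G i σ τ v0 n).2

/-- `σ` is a winning strategy for Player `i` from `v` in the turn-based game
`G_i` in which Player `i` reveals his action first. -/
def WinningStratFirst {A V : Type} (G : Game A V) (i : Fin 2) (σ : Strategy A V) (v : V) : Prop :=
  Legal G i σ ∧ ∀ τ : RespStrategy A V, RespLegal G (1 - i) τ →
    WinsPath G i (pathFirst G i σ τ v)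

end Conc

namespace Conc

/-- A transducer over the alphabet `A × A` with a partial transition function,
an output `out : Q → Fin 2`, and an allowed-actions labeling such that the
transition is defined on pairs of allowed actions. -/
structure Transducer (A : Type) where
  Q : Type
  q0 : Q
  step : Q → A → A → Option Q
  out : Q → Fin 2
  allowed : Q → Fin 2 → Set A
  allowed_nonempty : ∀ q i, (allowed q i).Nonempty
  step_defined : ∀ q a1 a2, a1 ∈ allowed q 0 → a2 ∈ allowed q 1 → (step q a1 a2).isSome

/-- `u` is a neighbor of `v`. -/
def Neighbor {A V : Type} (G : Game A V) (v u : V) : Prop :=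
  ∃ a1 a2, G.trans v a1 a2 = u

/-- Player `i` controls `v`: his actions alone determine the successor. -/
def Controls {A V : Type} (G : Game A V) (i : Fin 2) (v : V) : Prop :=
  ∀ a ∈ G.allowed v i, ∃ u, ∀ a' ∈ G.allowed v (1 - i),
    (if i = 0 then G.trans v a a' else G.trans v a' a) = u

/-- `G` is `R`-concurrent (conditions (1)–(6) of the paper):  the vertices are
partitioned into configuration (`isConfig`) and intermediate vertices, the
objective ignores intermediate vertices, successors of configuration vertices
are intermediate and the transition there is injective in the pair of actions,
intermediate vertices are controlled by one player and have uniformly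
intermediate or uniformly configuration neighbors, vertices with intermediate
neighborhoods have disjoint neighborhoods, and each vertex carries a state of
`R` updated consistently. -/
structure RConc {A V : Type} (R : Transducer A) (G : Game A V) where
  isConfig : V → Prop
  st : V → R.Q
  obj_ignores_intermediate : ∀ p p' : ℕ → V,
    (∀ n, p n ≠ p' n → ¬ isConfig (p n) ∧ ¬ isConfig (p' n)) → (G.obj p ↔ G.obj p')
  config_succ_intermediate : ∀ v, isConfig v → ∀ a1 a2, ¬ isConfig (G.trans v a1 a2)
  config_injective : ∀ v, isConfig v → ∀ a1 a2 a1' a2',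
    G.trans v a1 a2 = G.trans v a1' a2' → a1 = a1' ∧ a2 = a2'
  inter_controlled : ∀ v, ¬ isConfig v → Controls G 0 v ∨ Controls G 1 v
  inter_uniform : ∀ v, ¬ isConfig v →
    (∀ a1 a2, isConfig (G.trans v a1 a2)) ∨ (∀ a1 a2, ¬ isConfig (G.trans v a1 a2))
  inter_disjoint : ∀ v v', v ≠ v' →
    (∀ a1 a2, ¬ isConfig (G.trans v a1 a2)) → (∀ a1 a2, ¬ isConfig (G.trans v' a1 a2)) →
    ∀ u, Neighbor G v u → ¬ Neighbor G v' u
  config_allowed : ∀ v, isConfig v → ∀ i, G.allowed v i = R.allowed (st v) i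
  config_step : ∀ v, isConfig v → ∀ a1 ∈ G.allowed v 0, ∀ a2 ∈ G.allowed v 1,
    R.step (st v) a1 a2 = some (st (G.trans v a1 a2)) ∧
      Controls G (R.out (st (G.trans v a1 a2))) (G.trans v a1 a2)
  inter_step : ∀ v, ¬ isConfig v → ∀ a1 a2, ¬ isConfig (G.trans v a1 a2) →
    R.step (st v) a1 a2 = some (st (G.trans v a1 a2))
  inter_to_config : ∀ v, ¬ isConfig v → ∀ a1 a2, isConfig (G.trans v a1 a2) →
    st (G.trans v a1 a2) = st v

/-- The objective of `G` is a Borel subset of `V^ω` (w.r.t. the discrete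
σ-algebra on `V` and the product σ-algebra on `ℕ → V`). -/
def BorelObj {A V : Type} (G : Game A V) : Prop :=
  @MeasurableSet (ℕ → V) (@MeasurableSpace.pi ℕ (fun _ => V) (fun _ => ⊤))
    {p : ℕ → V | G.obj p}

/-- Player 1 has a winning strategy from `v` in the turn-based game `G_1`
(Player 1 reveals his action first). -/
def P1WinsFirst {A V : Type} (G : Game A V) (v : V) : Prop :=
  ∃ σ, WinningStratFirst G 0 σ v

/-- `R` admits local determinacy: in every `R`-concurrent game with a Borel
objective, from every vertex that is losing for Player 1 in `G_1` there is a
Player 2 allowed action such that every joint successor is again losing for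
Player 1 in `G_1`. -/
def LocalDet {A : Type} (R : Transducer A) : Prop :=
  ∀ (V : Type) (G : Game A V), RConc R G → BorelObj G →
    ∀ v : V, ¬ P1WinsFirst G v →
      ∃ a2 ∈ G.allowed v 1, ∀ a1 ∈ G.allowed v 0, ¬ P1WinsFirst G (G.trans v a1 a2)

/-- The set of vertices visited infinitely often by a path. -/
def infOcc {V : Type} (p : ℕ → V) : Set V := {v | ∀ N, ∃ n ≥ N, p n = v}

end Conc

namespace Conc

theorem borelObj_of_reach {A V : Type} (G : Game A V) (T : Set V)
    (hobj : G.obj = fun p => ∃ n, p n ∈ T) : BorelObj G := by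
  letI : MeasurableSpace V := ⊤
  have h : {p : ℕ → V | G.obj p} = ⋃ n, (fun p : ℕ → V => p n) ⁻¹' T := by
    ext p
    simp [hobj]
  unfold BorelObj
  rw [h]
  exact MeasurableSet.iUnion fun n => measurable_pi_apply n MeasurableSpace.measurableSet_top

/-- A responder who ignores the revealed action produces the same play as in the concurrent
game. -/
theorem playFirstAux_ignore {A V : Type} (G : Game A V) (σ τ : Strategy A V) (v : V) (n : ℕ) :
    playFirstAux G 0 σ (fun h u _ => τ h u) v n = playAux G σ τ v n := by
  induction n with
  | zero => rfl
  | succ n ih => simp [playFirstAux, playAux, ih]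

theorem winningStrat_of_first {A V : Type} (G : Game A V) (σ : Strategy A V) (v : V)
    (h : WinningStratFirst G 0 σ v) : WinningStrat G 0 σ v := by
  refine ⟨h.1, fun τ hτ => ?_⟩
  have h2 := h.2 (fun h u _ => τ h u) fun h u _ => hτ h u
  have hp : pathFirst G 0 σ (fun h u _ => τ h u) v = path G σ τ v :=
    funext fun n => congrArg Prod.snd (playFirstAux_ignore G σ τ v n)
  rw [hp] at h2
  simpa using h2

theorem p1WinsFirst_of_mem {A V : Type} (G : Game A V) (T : Set V)
    (hobj : G.obj = fun p => ∃ n, p n ∈ T) (v : V) (hv : v ∈ T) : P1WinsFirst G v := by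
  refine ⟨fun _ u => (G.allowed_nonempty u 0).some,
    fun _ u => (G.allowed_nonempty u 0).some_mem, fun τ _ => ?_⟩
  simp only [WinsPath, hobj, if_true]
  exact ⟨0, hv⟩

end Conc

open Conc in
/-- If a concurrent game with a reachability objective is
`R`-concurrent for a transducer `R` that admits local determinacy, then it is
determined at every vertex. -/
theorem stmt_1 {A V : Type} [Fintype A] [Fintype V] (R : Transducer A)
    (hR : LocalDet R) (G : Game A V) (rc : RConc R G) (T : Set V)
    (hobj : G.obj = fun p => ∃ n, p n ∈ T) :
    ∀ v : V, Determined G v := by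
  classical
  intro v
  have hloc := hR V G rc (borelObj_of_reach G T hobj)
  by_cases hv : P1WinsFirst G v
  · obtain ⟨σ, hσ⟩ := hv
    exact Or.inl ⟨σ, winningStrat_of_first G σ v hσ⟩
  · right
    choose f hf hstay using hloc
    let σ : Strategy A V := fun _ u =>
      if h : ¬ P1WinsFirst G u then f u h else (G.allowed_nonempty u 1).some
    refine ⟨σ, fun _ u => ?_, fun τ hτ => ?_⟩
    · by_cases h : ¬ P1WinsFirst G u
      · simpa only [σ, dif_pos h] using hf u h
      · simpa only [σ, dif_neg h] using (G.allowed_nonempty u 1).some_mem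
    · have hinv : ∀ n, ¬ P1WinsFirst G (path G τ σ v n) := by
        intro n
        induction n with
        | zero => exact hv
        | succ n ih =>
          have h := hstay _ ih _ (hτ (playAux G τ σ v n).1 (playAux G τ σ v n).2)
          have hs : σ (playAux G τ σ v n).1 (playAux G τ σ v n).2 = f _ ih := dif_pos ih
          rw [← hs] at h
          exact h
      simp only [WinsPath, hobj, one_ne_zero, if_false]
      rintro ⟨n, hn⟩
      exact hinv n (p1WinsFirst_of_mem G T hobj _ hn)
end

section
/- Reachability bidding games with alternating tie-breaking are not determined: there exist a discrete bidding game with a reachability objective and alternating tie-breaking, and a configuration of this game, from which neither Player 1 nor Player 2 has a winning strategy. (A witness is a four-vertex game with total budget 2, both players starting with budget 1 and Player 2 holding the advantage.) -/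
/-!
The witness has vertices `0, 1, 2, 3`, target `3` (a sink), and edges `0 → 1`, `1 → 0`, `1 → 2`,
`2 → 0`, `2 → 3`; the initial vertex is `2`, with budgets `1, 1` and Player 2 holding the advantage.

Neither player can afford to commit to a bid.  If the opponent's bid at the initial vertex is known,
Player 2 wants to match it (he then wins the tie and moves away from the target), whereas Player 1
wants to mismatch it.  Since a strategy is deterministic and both players see the same history, a
spoiling strategy may consult the bid that the given strategy is about to make.

* Against a strategy of Player 1, the spoiler `spoil1` keeps the play in the set `Safe` of
  configurations, which avoids the target and contains the initial configuration
  (`Safe_start`, `Safe_step`).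
* Against a strategy of Player 2, the spoiler `spoil2` always moves forward and reaches the target
  within four rounds: `rank` strictly decreases along the play until it hits `0`, which is only
  attained at the target (`rank_start`, `rank_step`, `rank_target`).

Both step lemmas concern finitely many configurations and bids, and are decided by enumeration.
-/

/-! # Discrete bidding games -/

namespace Bid

/-- A tie-breaking mechanism with a set `S` of states.  When a tie occurs in
state `s`, Player `chooser s` selects the winner of the bidding from the
nonempty set `opts s` (a deterministic mechanism has a singleton `opts s`, so
the choice is forced).  After each bidding the state is updated by `update`
from the outcome of the bidding: whether a tie occurred, the winner, the
winning bid, and the vertex the winner moved to.  Player 1 is `0 : Fin 2`,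
Player 2 is `1 : Fin 2`. -/
structure Mech (V : Type) where
  S : Type
  opts : S → Set (Fin 2)
  opts_nonempty : ∀ s, (opts s).Nonempty
  chooser : S → Fin 2
  update : S → Bool → Fin 2 → ℕ → V → S

/-- A discrete bidding game: a finite directed graph in which every vertex has
an outgoing edge, a total budget `N`, a tie-breaking mechanism, and an
objective for Player 1 on infinite vertex sequences. -/
structure Game (V : Type) where
  E : V → V → Prop
  succ_exists : ∀ v, ∃ u, E v u
  N : ℕ
  M : Mech V
  obj : (ℕ → V) → Prop

/-- A configuration `⟨v, B1, B2, s⟩`: token position, budgets, mechanism state. -/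
structure Conf (V S : Type) where
  v : V
  B1 : ℕ
  B2 : ℕ
  s : S

/-- A round of the game, as recorded in histories: the configuration and the
two bids. -/
abbrev Round (V S : Type) := Conf V S × ℕ × ℕ

abbrev Hist (V S : Type) := List (Round V S)

/-- A (pure) strategy: a bid for each history and current configuration, a
choice of bidding winner upon a tie (used when this player is the mechanism's
chooser), and a choice of successor vertex upon winning a bidding. -/
structure Strat (V : Type) (M : Mech V) where
  bid : Hist V M.S → Conf V M.S → ℕ
  choice : Hist V M.S → Conf V M.S → ℕ → Fin 2
  move : Hist V M.S → Conf V M.S → ℕ → ℕ → V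

def budget {V S : Type} (i : Fin 2) (c : Conf V S) : ℕ :=
  if i = 0 then c.B1 else c.B2

/-- Legality of a strategy for Player `i`: bids never exceed the available
budget, tie choices are members of the mechanism's option set, and moves
follow edges of the graph. -/
def Legal {V : Type} (G : Game V) (i : Fin 2) (σ : Strat V G.M) : Prop :=
  (∀ h c, σ.bid h c ≤ budget i c) ∧
  (∀ h c b, σ.choice h c b ∈ G.M.opts c.s) ∧
  (∀ h c b1 b2, G.E c.v (σ.move h c b1 b2))

/-- The configuration after a bidding at `c` with bids `b1, b2`, tie flag
`tie`, bidding winner `w` and destination `d`: the winner pays his bid to the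
loser, the token moves to `d`, and the mechanism state is updated. -/
def nextConf {V : Type} (G : Game V) (c : Conf V G.M.S) (b1 b2 : ℕ) (tie : Bool)
    (w : Fin 2) (d : V) : Conf V G.M.S :=
  { v := d
    B1 := if w = 0 then c.B1 - b1 else c.B1 + b2
    B2 := if w = 0 then c.B2 + b1 else c.B2 - b2
    s := G.M.update c.s tie w (if w = 0 then b1 else b2) d }

/-- One round of the play of two strategies. -/
def stepPlay {V : Type} (G : Game V) (σ1 σ2 : Strat V G.M)
    (p : Hist V G.M.S × Conf V G.M.S) : Hist V G.M.S × Conf V G.M.S :=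
  let h := p.1
  let c := p.2
  let b1 := σ1.bid h c
  let b2 := σ2.bid h c
  let w : Fin 2 :=
    if b2 < b1 then 0
    else if b1 < b2 then 1
    else if G.M.chooser c.s = 0 then σ1.choice h c b1 else σ2.choice h c b1
  let d := if w = 0 then σ1.move h c b1 b2 else σ2.move h c b1 b2
  (h ++ [(c, b1, b2)], nextConf G c b1 b2 (decide (b1 = b2)) w d)

def playAux {V : Type} (G : Game V) (σ1 σ2 : Strat V G.M) (c0 : Conf V G.M.S) :
    ℕ → Hist V G.M.S × Conf V G.M.S
  | 0 => ([], c0)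
  | n + 1 => stepPlay G σ1 σ2 (playAux G σ1 σ2 c0 n)

/-- The vertex path of the play of `σ1` against `σ2` from `c0`. -/
def path {V : Type} (G : Game V) (σ1 σ2 : Strat V G.M) (c0 : Conf V G.M.S) (n : ℕ) : V :=
  (playAux G σ1 σ2 c0 n).2.v

/-- `σ` is a winning strategy for Player `i` at the configuration `c`. -/
def WinStrat {V : Type} (G : Game V) (i : Fin 2) (σ : Strat V G.M)
    (c : Conf V G.M.S) : Prop :=
  Legal G i σ ∧ ∀ τ : Strat V G.M, Legal G (1 - i) τ →
    (if i = 0 then G.obj (path G σ τ c) else ¬ G.obj (path G τ σ c))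

/-- Player `i` has a winning strategy from configuration `c`. -/
def HasWin {V : Type} (G : Game V) (i : Fin 2) (c : Conf V G.M.S) : Prop :=
  ∃ σ, WinStrat G i σ c

/-! ## The turn-based game `G_1` in which Player 1 reveals his bid first. -/

/-- A Player 2 strategy in `G_1`: its bid may additionally depend on the bid
just revealed by Player 1. -/
structure RespStrat (V : Type) (M : Mech V) where
  bid : Hist V M.S → Conf V M.S → ℕ → ℕ
  choice : Hist V M.S → Conf V M.S → ℕ → Fin 2
  move : Hist V M.S → Conf V M.S → ℕ → ℕ → V

def RespLegal {V : Type} (G : Game V) (τ : RespStrat V G.M) : Prop :=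
  (∀ h c b1, τ.bid h c b1 ≤ c.B2) ∧
  (∀ h c b, τ.choice h c b ∈ G.M.opts c.s) ∧
  (∀ h c b1 b2, G.E c.v (τ.move h c b1 b2))

def stepPlayFirst {V : Type} (G : Game V) (σ : Strat V G.M) (τ : RespStrat V G.M)
    (p : Hist V G.M.S × Conf V G.M.S) : Hist V G.M.S × Conf V G.M.S :=
  let h := p.1
  let c := p.2
  let b1 := σ.bid h c
  let b2 := τ.bid h c b1
  let w : Fin 2 :=
    if b2 < b1 then 0
    else if b1 < b2 then 1
    else if G.M.chooser c.s = 0 then σ.choice h c b1 else τ.choice h c b1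
  let d := if w = 0 then σ.move h c b1 b2 else τ.move h c b1 b2
  (h ++ [(c, b1, b2)], nextConf G c b1 b2 (decide (b1 = b2)) w d)

def playFirstAux {V : Type} (G : Game V) (σ : Strat V G.M) (τ : RespStrat V G.M)
    (c0 : Conf V G.M.S) : ℕ → Hist V G.M.S × Conf V G.M.S
  | 0 => ([], c0)
  | n + 1 => stepPlayFirst G σ τ (playFirstAux G σ τ c0 n)

def pathFirst {V : Type} (G : Game V) (σ : Strat V G.M) (τ : RespStrat V G.M)
    (c0 : Conf V G.M.S) (n : ℕ) : V :=
  (playFirstAux G σ τ c0 n).2.v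

/-- Player 1 has a winning strategy from configuration `c` in the turn-based
game `G_1` in which he reveals his bid before Player 2. -/
def P1WinsFirst {V : Type} (G : Game V) (c : Conf V G.M.S) : Prop :=
  ∃ σ : Strat V G.M, Legal G 0 σ ∧
    ∀ τ : RespStrat V G.M, RespLegal G τ → G.obj (pathFirst G σ τ c)

/-! ## The bidding matrix -/

/-- The position of `G_1` reached from `c` after bids `b1, b2` with bidding
winner `w` is winning for Player 1: if Player 1 won the bidding he can choose a
successor leading to a configuration from which he wins `G_1`, and if Player 2
won the bidding then every successor he may choose leads to such a
configuration. -/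
def AfterWin {V : Type} (G : Game V) (c : Conf V G.M.S) (b1 b2 : ℕ) (tie : Bool)
    (w : Fin 2) : Prop :=
  if w = 0 then ∃ d, G.E c.v d ∧ P1WinsFirst G (nextConf G c b1 b2 tie w d)
  else ∀ d, G.E c.v d → P1WinsFirst G (nextConf G c b1 b2 tie w d)

/-- The position of `G_1` reached from `c` after the bids `b1, b2` — just
before the bidding winner chooses a successor vertex and, on a tie, before the
mechanism's chooser decides who wins the bidding — is winning for Player 1. -/
def PosWin1 {V : Type} (G : Game V) (c : Conf V G.M.S) (b1 b2 : ℕ) : Prop :=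
  if b1 = b2 then
    if G.M.chooser c.s = 0 then ∃ w ∈ G.M.opts c.s, AfterWin G c b1 b2 true w
    else ∀ w ∈ G.M.opts c.s, AfterWin G c b1 b2 true w
  else AfterWin G c b1 b2 false (if b2 < b1 then 0 else 1)

open Classical in
/-- The bidding matrix of the configuration `c`: `Mc G c b1 b2 = 1` if the
position of `G_1` reached from `c` after the bids `b1, b2` is winning for
Player 1 in `G_1`, and `= 2` otherwise. -/
noncomputable def Mc {V : Type} (G : Game V) (c : Conf V G.M.S) (b1 b2 : ℕ) : ℕ :=
  if PosWin1 G c b1 b2 then 1 else 2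

/-! ## Particular tie-breaking mechanisms -/

/-- A general tie-breaking transducer: its state is updated from the letter
describing the outcome of a bidding (vertex moved to, winner, whether a tie
occurred, winning bid), and on a tie in state `q` Player `Γ q` wins. -/
structure TieTransducer (V : Type) where
  Q : Type
  q0 : Q
  δ : Q → V → Fin 2 → Bool → ℕ → Q
  Γ : Q → Fin 2

/-- The mechanism of a tie-breaking transducer. -/
def TieTransducer.mech {V : Type} (T : TieTransducer V) : Mech V where
  S := T.Q
  opts := fun q => {T.Γ q}
  opts_nonempty := fun q => ⟨T.Γ q, rfl⟩
  chooser := fun q => T.Γ q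
  update := fun q tie w b d => T.δ q d w tie b

/-- A tie-breaking transducer that is un-aware of ties: its input letters
record only the vertex moved to, the winner, and the winning bid. -/
structure TieTransducerUA (V : Type) where
  Q : Type
  q0 : Q
  δ : Q → V → Fin 2 → ℕ → Q
  Γ : Q → Fin 2

/-- The mechanism of a tie-breaking transducer that is un-aware of ties. -/
def TieTransducerUA.mech {V : Type} (T : TieTransducerUA V) : Mech V where
  S := T.Q
  opts := fun q => {T.Γ q}
  opts_nonempty := fun q => ⟨T.Γ q, rfl⟩
  chooser := fun q => T.Γ q
  update := fun q _tie w b d => T.δ q d w b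

/-- Advantage-based tie-breaking: the state records the advantage holder; on a
tie the holder chooses the winner; if he chooses himself the advantage passes
to the opponent, otherwise he keeps it; non-tied biddings leave the state
unchanged. -/
def advMech (V : Type) : Mech V where
  S := Fin 2
  opts := fun _ => Set.univ
  opts_nonempty := fun _ => ⟨0, Set.mem_univ 0⟩
  chooser := fun s => s
  update := fun s tie w _ _ => if tie then (if w = s then 1 - s else s) else s

/-- Alternating tie-breaking: the state records the advantage holder; on a tie
the holder wins the bidding and the advantage passes to the other player;
non-tied biddings leave the state unchanged. -/
def altMech (V : Type) : Mech V where
  S := Fin 2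
  opts := fun s => {s}
  opts_nonempty := fun s => ⟨s, rfl⟩
  chooser := fun s => s
  update := fun s tie _ _ _ => if tie then 1 - s else s

end Bid

namespace Bid

namespace Alt

/-- The edge relation of the witness graph. -/
def E (v u : Fin 4) : Prop :=
  (v, u) ∈ [((0 : Fin 4), (1 : Fin 4)), (1, 0), (1, 2), (2, 0), (2, 3), (3, 3)]

instance (v u : Fin 4) : Decidable (E v u) := by unfold E; infer_instance

theorem E_succ : ∀ v, ∃ u, E v u := by decide

/-- The witness game: reach the vertex `3`, with total budget `2`. -/
abbrev G : Game (Fin 4) := ⟨E, E_succ, 2, altMech (Fin 4), fun p => ∃ n, p n ∈ ({3} : Set (Fin 4))⟩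

/-- The initial configuration. -/
def start : Conf (Fin 4) (Fin 2) := ⟨2, 1, 1, 1⟩

/-- The winner of a bidding in which Player `s` holds the advantage. -/
def winner (s : Fin 2) (b1 b2 : ℕ) : Fin 2 :=
  if b2 < b1 then 0 else if b1 < b2 then 1 else s

/-- The configuration following `c` when the bids are `b1`, `b2` and Players 1 and 2 intend to move
to `d1` and `d2` respectively. -/
def outcome (c : Conf (Fin 4) (Fin 2)) (b1 b2 : ℕ) (d1 d2 : Fin 4) : Conf (Fin 4) (Fin 2) :=
  nextConf G c b1 b2 (decide (b1 = b2)) (winner c.s b1 b2)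
    (if winner c.s b1 b2 = 0 then d1 else d2)

/-- Legal tie choices are forced, so a round of play is an `outcome`. -/
theorem stepPlay_eq (σ τ : Strat (Fin 4) (altMech (Fin 4))) (hσ : Legal G 0 σ) (hτ : Legal G 1 τ)
    (p : Hist (Fin 4) (Fin 2) × Conf (Fin 4) (Fin 2)) :
    (stepPlay G σ τ p).2 = outcome p.2 (σ.bid p.1 p.2) (τ.bid p.1 p.2)
      (σ.move p.1 p.2 (σ.bid p.1 p.2) (τ.bid p.1 p.2))
      (τ.move p.1 p.2 (σ.bid p.1 p.2) (τ.bid p.1 p.2)) := by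
  have h1 : ∀ h c b, σ.choice h c b = c.s := hσ.2.1
  have h2 : ∀ h c b, τ.choice h c b = c.s := hτ.2.1
  have e : ∀ s : Fin 2, (if (altMech (Fin 4)).chooser s = 0 then s else s) = s := fun s => ite_self s
  simp only [stepPlay, outcome, winner, h1, h2]
  erw [e]
  rfl

/-! ### Spoiling a strategy of Player 1 -/

/-- The configurations from which Player 2 can avoid the target when Player 1 reveals his bids. -/
def Safe (c : Conf (Fin 4) (Fin 2)) : Prop :=
  c.B1 + c.B2 = 2 ∧ c.v ≠ 3 ∧ ¬ (c.v = 0 ∧ c.B1 = 2 ∧ c.s = 1) ∧ ¬ (c.v = 1 ∧ c.B1 = 2 ∧ c.s = 0) ∧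
    (c.v = 2 → c.B1 = 0 ∨ (c.B1 = 1 ∧ c.s = 1))

instance (c : Conf (Fin 4) (Fin 2)) : Decidable (Safe c) := by unfold Safe; infer_instance

/-- The bid of Player 2 in response to the bid `b1`: at vertex `2` he must win the bidding, matching
`b1` when he holds the advantage and bidding `1` otherwise; elsewhere he bids `0`. -/
def resp1 (c : Conf (Fin 4) (Fin 2)) (b1 : ℕ) : ℕ :=
  min c.B2 (if c.v = 2 then (if c.s = 1 then b1 else 1) else 0)

/-- The move of Player 2 away from the target. -/
def back (v : Fin 4) : Fin 4 := ![1, 0, 0, 3] v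

theorem E_back : ∀ v, E v (back v) := by decide

theorem Safe_start : Safe start := by decide

theorem Safe_step (c : Conf (Fin 4) (Fin 2)) (hc : Safe c) (b1 : ℕ) (hb : b1 ≤ c.B1) (d : Fin 4)
    (hd : E c.v d) : Safe (outcome c b1 (resp1 c b1) d (back c.v)) := by
  have key : ∀ (v : Fin 4) (s : Fin 2) (B b : Fin 3) (d : Fin 4), b ≤ B → E v d →
      Safe ⟨v, B, 2 - B, s⟩ →
      Safe (outcome ⟨v, B, 2 - B, s⟩ b (resp1 ⟨v, B, 2 - B, s⟩ b) d (back v)) := by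
    decide
  obtain ⟨v, B1, B2, s⟩ := c
  obtain ⟨hB, -⟩ := id hc
  simp only at hB hb hd
  obtain rfl : B2 = 2 - B1 := by omega
  exact key v s ⟨B1, by omega⟩ ⟨b1, by omega⟩ d hb hd hc

/-- The strategy of Player 2 spoiling the strategy `σ` of Player 1. -/
def spoil1 (σ : Strat (Fin 4) (altMech (Fin 4))) : Strat (Fin 4) (altMech (Fin 4)) where
  bid h c := resp1 c (σ.bid h c)
  choice _ c _ := c.s
  move _ c _ _ := back c.v

theorem spoil1_legal (σ : Strat (Fin 4) (altMech (Fin 4))) : Legal G 1 (spoil1 σ) :=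
  ⟨fun _ _ => min_le_left _ _, fun _ _ _ => rfl, fun _ c _ _ => E_back c.v⟩

theorem not_hasWin_one : ¬ HasWin G 0 start := by
  rintro ⟨σ, hσ, hwin⟩
  obtain ⟨n, hn⟩ : ∃ n, path G σ (spoil1 σ) start n = 3 := hwin (spoil1 σ) (spoil1_legal σ)
  have safe : ∀ n, Safe (playAux G σ (spoil1 σ) start n).2 := by
    intro n
    induction n with
    | zero => exact Safe_start
    | succ n ih =>
      exact (congrArg Safe (stepPlay_eq σ _ hσ (spoil1_legal σ) _)).mpr
        (Safe_step _ ih _ (hσ.1 _ _) _ (hσ.2.2 _ _ _ _))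
  exact (safe n).2.1 hn

/-! ### Spoiling a strategy of Player 2 -/

/-- The number of rounds in which Player 1 forces a visit to the target when Player 2 reveals his
bids, for the configurations met along the way; the value `5` stands for all other
configurations. -/
def rank (c : Conf (Fin 4) (Fin 2)) : ℕ :=
  if c.v = 3 then 0
  else if c.B1 + c.B2 ≠ 2 then 5
  else if c.v = 2 ∧ c.B1 = 2 ∧ c.s = 1 then 1
  else if c.v = 1 ∧ c.B1 = 2 ∧ c.s = 0 then 2
  else if c.v = 0 ∧ c.B1 = 2 ∧ c.s = 1 then 3
  else if c.v = 2 ∧ c.B1 = 1 ∧ c.s = 1 then 4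
  else 5

/-- The bid of Player 1 in response to the bid `b2`: at vertex `2` he mismatches `b2`, so as either to
reach the target or to be paid by Player 2; elsewhere he bids `0`. -/
def resp2 (c : Conf (Fin 4) (Fin 2)) (b2 : ℕ) : ℕ :=
  min c.B1 (if c.v = 2 then 1 - b2 else 0)

/-- The move of Player 1 towards the target. -/
def forth (v : Fin 4) : Fin 4 := ![1, 2, 3, 3] v

theorem E_forth : ∀ v, E v (forth v) := by decide

theorem rank_start : rank start = 4 := by decide

theorem rank_target (c : Conf (Fin 4) (Fin 2)) (hc : rank c = 0) : c.v = 3 := by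
  unfold rank at hc
  split_ifs at hc
  assumption

theorem rank_step (c : Conf (Fin 4) (Fin 2)) (h0 : rank c ≠ 0) (hc : rank c ≤ 4) (b2 : ℕ)
    (hb : b2 ≤ c.B2) (d : Fin 4) (hd : E c.v d) :
    rank (outcome c (resp2 c b2) b2 (forth c.v) d) < rank c := by
  have key : ∀ (v : Fin 4) (s : Fin 2) (B b : Fin 3) (d : Fin 4), (b : ℕ) ≤ 2 - B → E v d →
      rank ⟨v, B, 2 - B, s⟩ ≠ 0 → rank ⟨v, B, 2 - B, s⟩ ≤ 4 →
      rank (outcome ⟨v, B, 2 - B, s⟩ (resp2 ⟨v, B, 2 - B, s⟩ b) b (forth v) d) <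
        rank ⟨v, B, 2 - B, s⟩ := by
    decide
  obtain ⟨v, B1, B2, s⟩ := c
  have hB : B1 + B2 = 2 := by
    by_contra hB
    by_cases hv : v = 3 <;> simp [rank, hv, hB] at h0 hc
  simp only at hb hd
  obtain rfl : B2 = 2 - B1 := by omega
  exact key v s ⟨B1, by omega⟩ ⟨b2, by omega⟩ d hb hd h0 hc

/-- The strategy of Player 1 spoiling the strategy `τ` of Player 2. -/
def spoil2 (τ : Strat (Fin 4) (altMech (Fin 4))) : Strat (Fin 4) (altMech (Fin 4)) where
  bid h c := resp2 c (τ.bid h c)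
  choice _ c _ := c.s
  move _ c _ _ := forth c.v

theorem spoil2_legal (τ : Strat (Fin 4) (altMech (Fin 4))) : Legal G 0 (spoil2 τ) :=
  ⟨fun _ _ => min_le_left _ _, fun _ _ _ => rfl, fun _ c _ _ => E_forth c.v⟩

theorem not_hasWin_two : ¬ HasWin G 1 start := by
  rintro ⟨τ, hτ, hwin⟩
  have avoid : ¬ ∃ n, path G (spoil2 τ) τ start n = 3 := hwin (spoil2 τ) (spoil2_legal τ)
  have pos : ∀ n, rank (playAux G (spoil2 τ) τ start n).2 ≠ 0 := fun n h0 =>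
    avoid ⟨n, rank_target _ h0⟩
  have bound : ∀ n, rank (playAux G (spoil2 τ) τ start n).2 + n ≤ 4 := by
    intro n
    induction n with
    | zero => exact rank_start.le
    | succ n ih =>
      have step : rank (playAux G (spoil2 τ) τ start (n + 1)).2 <
          rank (playAux G (spoil2 τ) τ start n).2 :=
        (congrArg rank (stepPlay_eq _ τ (spoil2_legal τ) hτ _)).trans_lt
          (rank_step _ (pos n) (by omega) _ (hτ.1 _ _) _ (hτ.2.2 _ _ _ _))
      omega
  have := bound 5
  omega

end Alt

end Bid

open Bid in
/-- Reachability bidding games with alternating tie-breaking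
are not determined: there is a discrete bidding game with a reachability
objective and alternating tie-breaking, and a configuration of it, from which
neither player has a winning strategy.  (The witness is a four-vertex game
with total budget `2`, both players starting with budget `1` and Player 2
holding the advantage.) -/
theorem stmt_5 :
    ∃ (V : Type) (_ : Fintype V) (E : V → V → Prop) (hsucc : ∀ v, ∃ u, E v u)
      (T : Set V) (c : Conf V (Fin 2)),
      Fintype.card V = 4 ∧ c.B1 = 1 ∧ c.B2 = 1 ∧ c.s = 1 ∧
      (let G : Game V := ⟨E, hsucc, 2, altMech V, fun p => ∃ n, p n ∈ T⟩
       ¬ HasWin G 0 c ∧ ¬ HasWin G 1 c) := by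
  exact ⟨Fin 4, inferInstance, Alt.E, Alt.E_succ, {3}, Alt.start, rfl, rfl, rfl, rfl,
    Alt.not_hasWin_one, Alt.not_hasWin_two⟩
end

section
/- There is a strongly-connected Büchi discrete-bidding game with advantage-based tie-breaking such that Player 1 loses with every pair of initial budgets. Concretely, in the bidding game with vertices {v1, v2, v3}, edges v1→v1, v1→v2, v2→v1, v2→v3, v3→v1, Büchi accepting set {v3}, and advantage-based tie-breaking, for every pair of initial budgets B1, B2 ∈ ℕ and every initial advantage holder s ∈ {1,2}, Player 2 has a winning strategy from the configuration ⟨v1, B1, B2, s⟩ (in particular, Player 1 has no winning strategy). -/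
namespace Bid

/-- The edge relation of the game of Statement 6 on the vertices
`v1 = 0`, `v2 = 1`, `v3 = 2`: edges `v1→v1, v1→v2, v2→v1, v2→v3, v3→v1`. -/
def g6E : Fin 3 → Fin 3 → Prop := fun a b =>
  (a = 0 ∧ b = 0) ∨ (a = 0 ∧ b = 1) ∨ (a = 1 ∧ b = 0) ∨ (a = 1 ∧ b = 2) ∨ (a = 2 ∧ b = 0)

/-- The strongly-connected Büchi bidding game of Statement 6 with
advantage-based tie-breaking and accepting set `{v3}`. -/
def G6 (N : ℕ) : Game (Fin 3) where
  E := g6E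
  succ_exists := by unfold g6E; decide
  N := N
  M := advMech (Fin 3)
  obj := fun p => ∀ m : ℕ, ∃ n ≥ m, p n = 2

end Bid

namespace Bid

/-- Player 2's strategy: bid `0`, win every tie in which he is the chooser, move to `v1`. -/
def zeroStrat (N : ℕ) : Strat (Fin 3) (G6 N).M where
  bid := fun _ _ => 0
  choice := fun _ _ _ => 1
  move := fun _ _ _ _ => 0

lemma zeroStrat_legal (N : ℕ) : Legal (G6 N) 1 (zeroStrat N) := by
  refine ⟨fun _ _ => Nat.zero_le _, fun _ _ _ => Set.mem_univ _, fun _ c _ _ => ?_⟩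
  change g6E c.v 0
  have : ∀ v, g6E v 0 := by unfold g6E; decide
  exact this c.v

/-- One round against `zeroStrat`. If Player 1's budget is unchanged then his bid was `0`, so the
round was a tie, and either Player 2 won it or Player 1 spent his advantage. -/
lemma zeroStrat_step (N : ℕ) (σ : Strat (Fin 3) (G6 N).M) (hσ : Legal (G6 N) 0 σ)
    (h : Hist (Fin 3) (Fin 2)) (c : Conf (Fin 3) (Fin 2)) :
    let c' : Conf (Fin 3) (Fin 2) := (stepPlay (G6 N) σ (zeroStrat N) (h, c)).2
    c'.B1 ≤ c.B1 ∧ (c'.B1 = c.B1 → c'.v = 0 ∨ (c.s = 0 ∧ g6E c.v c'.v ∧ c'.s = 1)) := by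
  intro c'
  obtain ⟨hbid, -, hmove⟩ := hσ
  have hb : σ.bid h c ≤ c.B1 := hbid h c
  have hm : g6E c.v (σ.move h c (σ.bid h c) 0) := hmove h c _ _
  have hc' : c' = (stepPlay (G6 N) σ (zeroStrat N) (h, c)).2 := rfl
  clear_value c'
  simp only [stepPlay, nextConf, zeroStrat, G6, advMech] at hc'
  rcases Nat.eq_zero_or_pos (σ.bid h c) with h0 | hpos
  · rw [h0] at hm
    by_cases hs : c.s = 0
    · by_cases hw : σ.choice h c 0 = 0
      · simp [hc', h0, hs, hw, hm]
      · simp [hc', h0, hs, hw]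
    · simp [hc', h0, hs]
  · have : c'.B1 = c.B1 - σ.bid h c := by simp [hc', hpos]
    omega

end Bid

open Bid in
/-- In the strongly-connected Büchi bidding game `G6` with
advantage-based tie-breaking, for every pair of initial budgets and every
initial advantage holder, Player 2 has a winning strategy from `v1`. -/
theorem stmt_6 (B1 B2 : ℕ) (s : Fin 2) :
    ∃ τ : Strat (Fin 3) (G6 (B1 + B2)).M,
      WinStrat (G6 (B1 + B2)) 1 τ ⟨0, B1, B2, s⟩ := by
  refine ⟨zeroStrat _, zeroStrat_legal _, fun σ hσ => ?_⟩
  rw [if_neg (by decide)]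
  replace hσ : Legal (G6 (B1 + B2)) 0 σ := hσ
  intro hobj
  let c : ℕ → Conf (Fin 3) (Fin 2) := fun n =>
    (playAux (G6 (B1 + B2)) σ (zeroStrat _) ⟨0, B1, B2, s⟩ n).2
  have hstep : ∀ n, (c (n + 1)).B1 ≤ (c n).B1 ∧ ((c (n + 1)).B1 = (c n).B1 →
      (c (n + 1)).v = 0 ∨ ((c n).s = 0 ∧ g6E (c n).v (c (n + 1)).v ∧ (c (n + 1)).s = 1)) :=
    fun n => zeroStrat_step _ σ hσ _ _
  have hanti : Antitone fun n => (c n).B1 := antitone_nat_of_succ_le fun n => (hstep n).1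
  obtain ⟨K, hK⟩ := WellFoundedGT.monotone_chain_condition (α := ℕᵒᵈ) ⟨fun n => (c n).B1, hanti⟩
  replace hK : ∀ n, K ≤ n → (c n).B1 = (c K).B1 := fun n hn => (hK n hn).symm
  have htail : ∀ n, K ≤ n → (c (n + 1)).v = 0 ∨
      ((c n).s = 0 ∧ g6E (c n).v (c (n + 1)).v ∧ (c (n + 1)).s = 1) := fun n hn =>
    (hstep n).2 (by rw [hK _ (by omega), hK n hn])
  have hkey : ∀ n, K + 1 ≤ n → (c n).v = 0 ∨ (c n).s = 1 := fun n hn => by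
    obtain ⟨m, rfl⟩ : ∃ m, n = m + 1 := ⟨n - 1, by omega⟩
    exact (htail m (by omega)).imp id fun h => h.2.2
  -- A step into `v3` in the tie phase starts at `v2` with Player 1 holding the advantage.
  obtain ⟨n, hn, h2⟩ := hobj (K + 2)
  obtain ⟨m, rfl⟩ : ∃ m, n = m + 1 := ⟨n - 1, by omega⟩
  replace h2 : (c (m + 1)).v = 2 := h2
  rcases htail m (by omega) with h | ⟨hs, hE, -⟩
  · rw [h2] at h; exact absurd h (by decide)
  · rcases hkey m (by omega) with h | h
    · rw [h, h2] at hE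
      exact absurd hE (by unfold g6E; decide)
    · rw [hs] at h; exact absurd h (by decide)
end

section
/- Let G be a discrete bidding game in which tie-breaking is resolved by a transducer T that is un-aware of ties, and let c = ⟨v, B1, B2, s⟩ be a configuration. For every bid b with 1 ≤ b ≤ min(B1, B2): if Γ(s) = 1 (Player 1 wins ties at c), then M_c(b, b) = M_c(b, b−1); dually, if Γ(s) = 2, then M_c(b, b) = M_c(b−1, b). -/
namespace Bid

/-- The tie flag enters the next configuration only through the transition of the
transducer, which discards it; hence the value of the position after a bidding
does not depend on that flag. -/
theorem afterWin_tie {V : Type} (T : TieTransducerUA V) (E : V → V → Prop)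
    (hsucc : ∀ v, ∃ u, E v u) (N : ℕ) (obj : (ℕ → V) → Prop)
    (c : Conf V T.Q) (b1 b2 : ℕ) (t t' : Bool) (w : Fin 2) :
    AfterWin (⟨E, hsucc, N, T.mech, obj⟩ : Game V) c b1 b2 t w ↔
      AfterWin (⟨E, hsucc, N, T.mech, obj⟩ : Game V) c b1 b2 t' w :=
  Iff.rfl

/-- The winner pays his own bid, so the value of the position after a bidding
depends only on the winner's bid. -/
theorem afterWin_zero {V : Type} (G : Game V) (c : Conf V G.M.S) (b b2 b2' : ℕ)
    (t : Bool) : AfterWin G c b b2 t 0 ↔ AfterWin G c b b2' t 0 := by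
  simp [AfterWin, nextConf]

theorem afterWin_one {V : Type} (G : Game V) (c : Conf V G.M.S) (b b1 b1' : ℕ)
    (t : Bool) : AfterWin G c b1 b t 1 ↔ AfterWin G c b1' b t 1 := by
  simp [AfterWin, nextConf]

/-- On a tie the transducer fixes the winner, whoever the nominal chooser is. -/
theorem posWin1_tie {V : Type} (T : TieTransducerUA V) (E : V → V → Prop)
    (hsucc : ∀ v, ∃ u, E v u) (N : ℕ) (obj : (ℕ → V) → Prop)
    (c : Conf V T.Q) (b : ℕ) :
    PosWin1 (⟨E, hsucc, N, T.mech, obj⟩ : Game V) c b b ↔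
      AfterWin (⟨E, hsucc, N, T.mech, obj⟩ : Game V) c b b true (T.Γ c.s) := by
  simp [PosWin1, TieTransducerUA.mech]

theorem posWin1_of_gt {V : Type} (G : Game V) (c : Conf V G.M.S) {b1 b2 : ℕ}
    (h : b2 < b1) : PosWin1 G c b1 b2 ↔ AfterWin G c b1 b2 false 0 := by
  simp [PosWin1, h, h.ne']

theorem posWin1_of_lt {V : Type} (G : Game V) (c : Conf V G.M.S) {b1 b2 : ℕ}
    (h : b1 < b2) : PosWin1 G c b1 b2 ↔ AfterWin G c b1 b2 false 1 := by
  simp [PosWin1, h.ne, h.not_gt]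

theorem Mc_congr {V : Type} (G : Game V) (c : Conf V G.M.S) {b1 b2 b1' b2' : ℕ}
    (h : PosWin1 G c b1 b2 ↔ PosWin1 G c b1' b2') : Mc G c b1 b2 = Mc G c b1' b2' := by
  unfold Mc
  split_ifs <;> tauto

end Bid

open Bid in
/-- In a discrete bidding game whose ties are resolved by a
transducer `T` that is un-aware of ties, for every configuration `c` and every
bid `1 ≤ b ≤ min(B1,B2)`: if Player 1 wins ties at `c` then
`M_c(b,b) = M_c(b,b-1)`, and dually if Player 2 wins ties at `c` then
`M_c(b,b) = M_c(b-1,b)`. -/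
theorem stmt_8 {V : Type} [Fintype V] (T : TieTransducerUA V) (hQ : Finite T.Q)
    (E : V → V → Prop) (hsucc : ∀ v, ∃ u, E v u) (N : ℕ) (obj : (ℕ → V) → Prop) :
    let G : Game V := ⟨E, hsucc, N, T.mech, obj⟩
    ∀ (c : Conf V T.Q), c.B1 + c.B2 = N →
      ∀ b : ℕ, 1 ≤ b → b ≤ min c.B1 c.B2 →
        (T.Γ c.s = 0 → Mc G c b b = Mc G c b (b - 1)) ∧
        (T.Γ c.s = 1 → Mc G c b b = Mc G c (b - 1) b) := by
  intro G c _ b hb _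
  constructor
  · intro h
    apply Mc_congr G c
    rw [posWin1_of_gt G c (by omega : b - 1 < b), posWin1_tie, h,
      afterWin_tie T E hsucc N obj c b b true false]
    exact afterWin_zero G c b b (b - 1) false
  · intro h
    apply Mc_congr G c
    rw [posWin1_of_lt G c (by omega : b - 1 < b), posWin1_tie, h,
      afterWin_tie T E hsucc N obj c b b true false]
    exact afterWin_one G c b b (b - 1) false
end

section
/- Let T be a tie-breaking transducer that is un-aware of ties. Then every discrete bidding game with a Müller objective that resolves ties using T is determined: from every configuration, either Player 1 or Player 2 has a winning strategy. -/
/-! ### Determinacy of parity games on arbitrary arenas -/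

namespace Parity

/-- The highest value that `q` takes infinitely often exists and is one of the `good` ones. -/
def Good (good : ℕ → Prop) (q : ℕ → ℕ) : Prop :=
  ∃ m, good m ∧ (∀ a, ∃ n ≥ a, q n = m) ∧ ∃ a, ∀ n ≥ a, q n ≤ m

lemma Good.of_tail {good : ℕ → Prop} {q : ℕ → ℕ} (a : ℕ)
    (h : Good good fun n => q (a + n)) : Good good q := by
  obtain ⟨m, hm, hinf, a', hle⟩ := h
  refine ⟨m, hm, fun c => ?_, a + a', fun n hn => ?_⟩
  · obtain ⟨n, hn, hq⟩ := hinf c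
    exact ⟨a + n, by omega, hq⟩
  · have := hle (n - a) (by omega)
    simpa [show a + (n - a) = n by omega] using this

variable {S : Type}

lemma update_mono {X X' : ℕ → Set S} (k : ℕ) {Y Y' : Set S} (hX : X ≤ X') (hY : Y ≤ Y') :
    Function.update X k Y ≤ Function.update X' k Y' := by
  intro j
  by_cases hj : j = k
  · subst hj; simpa using hY
  · simpa [hj] using hX j

/-- A forcing relation on an arena with positions `S`: `Fo s X` says that a fixed player can
ensure that the position after `s` lies in `X`. -/
abbrev Forcing (S : Type) := S → (Set S →o Prop)

/-- The nested fixpoint solving the parity condition on priorities below `k`: the positions from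
which the player can ensure that either some position `t` of priority `≥ k` is reached, whose
successor then lies in `X (p t)`, or the play is infinite and satisfies the parity condition.
The variable of priority `j` is bound by a greatest fixpoint if `j` is good and by a least one
otherwise; larger priorities are bound further outside. -/
noncomputable def fix (Fo : Forcing S) (p : S → ℕ) (good : ℕ → Prop) :
    ℕ → ((ℕ → Set S) →o Set S)
  | 0 => ⟨fun X => {s | Fo s (X (p s))}, fun _ _ h s hs => (Fo s).mono (h (p s)) hs⟩
  | k + 1 =>
    let g : (ℕ → Set S) → (Set S →o Set S) := fun X =>
      ⟨fun Y => fix Fo p good k (Function.update X k Y), fun _ _ h =>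
        (fix Fo p good k).mono (update_mono k le_rfl h)⟩
    have hg : Monotone g := fun _ _ h Y =>
      (fix Fo p good k).mono (update_mono k h le_rfl)
    open Classical in
    ⟨fun X => if good k then (g X).gfp else (g X).lfp, fun X X' h => by
      dsimp only
      split_ifs
      · exact OrderHom.gfp.mono (hg h)
      · exact OrderHom.lfp.mono (hg h)⟩

/-- The operator whose fixpoint is `fix Fo p good (k + 1) X`. -/
noncomputable def op (Fo : Forcing S) (p : S → ℕ) (good : ℕ → Prop) (k : ℕ) (X : ℕ → Set S) :
    Set S →o Set S :=
  ⟨fun Y => fix Fo p good k (Function.update X k Y), fun _ _ h =>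
    (fix Fo p good k).mono (update_mono k le_rfl h)⟩

lemma fix_succ_good (Fo : Forcing S) (p : S → ℕ) {good : ℕ → Prop} {k : ℕ} (hk : good k)
    (X : ℕ → Set S) : fix Fo p good (k + 1) X = (op Fo p good k X).gfp :=
  if_pos hk

lemma fix_succ_bad (Fo : Forcing S) (p : S → ℕ) {good : ℕ → Prop} {k : ℕ} (hk : ¬ good k)
    (X : ℕ → Set S) : fix Fo p good (k + 1) X = (op Fo p good k X).lfp :=
  if_neg hk

/-- What the opponent can force if the arena is determined at every single position. -/
def dual (Fo : Forcing S) : Forcing S := fun s =>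
  ⟨fun X => ¬ Fo s Xᶜ, fun _ _ h hX hY => hX ((Fo s).mono (Set.compl_subset_compl.2 h) hY)⟩

lemma compl_fix_le (Fo : Forcing S) (p : S → ℕ) (good : ℕ → Prop) (k : ℕ) (X : ℕ → Set S) :
    (fix Fo p good k X)ᶜ ≤ fix (dual Fo) p (fun j => ¬ good j) k (fun j => (X j)ᶜ) := by
  induction k generalizing X with
  | zero =>
    intro s hs h
    rw [compl_compl] at h
    exact hs h
  | succ k ih =>
    have key (Y : Set S) : (op Fo p good k X Y)ᶜ ≤
        op (dual Fo) p (fun j => ¬ good j) k (fun j => (X j)ᶜ) Yᶜ := by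
      refine (ih (Function.update X k Y)).trans (OrderHom.mono _ fun j => ?_)
      by_cases hj : j = k
      · subst hj; simp
      · simp [hj]
    by_cases hk : good k
    · rw [fix_succ_good Fo p hk, fix_succ_bad (dual Fo) p (not_not.2 hk)]
      set f' := op (dual Fo) p (fun j => ¬ good j) k (fun j => (X j)ᶜ)
      rw [compl_le_iff_compl_le]
      refine OrderHom.le_gfp _ ?_
      rw [compl_le_iff_compl_le]
      refine (key _).trans ?_
      rw [compl_compl, OrderHom.map_lfp]
    · rw [fix_succ_bad Fo p hk, fix_succ_good (dual Fo) p (good := fun j => ¬ good j) hk]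
      refine OrderHom.le_gfp _ ?_
      conv_lhs => rw [← OrderHom.map_lfp]
      exact key _

/-- A positional strategy on the nested fixpoint. It is set-valued: at `s` the player forces the
next position into `φ s`, and all sequences of positions that follow `φ` are required to be good
for him. -/
lemma exists_strategy (Fo : Forcing S) (p : S → ℕ) (good : ℕ → Prop) (k : ℕ)
    (X : ℕ → Set S) :
    ∃ φ : S → Set S, (∀ s ∈ fix Fo p good k X, Fo s (φ s)) ∧
      (∀ s ∈ fix Fo p good k X, ∀ t ∈ φ s, k ≤ p s → t ∈ X (p s)) ∧
      (∀ s ∈ fix Fo p good k X, ∀ t ∈ φ s, p s < k → t ∈ fix Fo p good k X) ∧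
      ∀ x : ℕ → S, (∀ n, x n ∈ fix Fo p good k X) → (∀ n, p (x n) < k) →
        (∀ n, x (n + 1) ∈ φ (x n)) → Good good (p ∘ x) := by
  induction k generalizing X with
  | zero =>
    exact ⟨fun s => X (p s), fun s hs => hs, fun s _ t ht _ => ht,
      fun s _ t _ h => absurd h (by omega), fun x _ h _ => absurd (h 0) (by omega)⟩
  | succ k ih =>
    by_cases hk : good k
    · rw [fix_succ_good Fo p hk]
      set W := (op Fo p good k X).gfp with hW
      have hfix : fix Fo p good k (Function.update X k W) = W :=
        (op Fo p good k X).map_gfp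
      obtain ⟨φ, h1, h2, h3, h4⟩ := ih (Function.update X k W)
      rw [hfix] at h1 h2 h3 h4
      refine ⟨φ, h1, fun s hs t ht h => ?_, fun s hs t ht h => ?_, fun x hx hp hφ => ?_⟩
      · simpa [show p s ≠ k by omega] using h2 s hs t ht (by omega)
      · rcases Nat.lt_succ_iff_lt_or_eq.1 h with h | h
        · exact h3 s hs t ht h
        · simpa [h] using h2 s hs t ht (by omega)
      · by_cases hinf : ∀ a, ∃ n ≥ a, p (x n) = k
        · exact ⟨k, hk, hinf, 0, fun n _ => Nat.lt_succ_iff.1 (hp n)⟩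
        · push Not at hinf
          obtain ⟨a, ha⟩ := hinf
          refine Good.of_tail a (h4 (fun n => x (a + n)) (fun n => hx _) (fun n => ?_)
            fun n => hφ _)
          have := hp (a + n)
          have := ha (a + n) (by omega)
          omega
    · rw [fix_succ_bad Fo p hk]
      set f := op Fo p good k X with hf
      -- `A o` is the `o`-th approximant of the least fixpoint; the rank of `s` is the least `o`
      -- with `s ∈ f (A o)`.
      let A : Ordinal.{0} → Set S := OrdinalApprox.lfpApprox f ⊥
      have hA (o) (s) : s ∈ A o ↔ ∃ o' < o, s ∈ f (A o') := by
        simp only [A]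
        rw [OrdinalApprox.lfpApprox]
        simp
      obtain ⟨o₀, ho₀⟩ := OrdinalApprox.lfp_mem_range_lfpApprox f
      have hlfp : f.lfp = A o₀ := ho₀.symm
      have hAle (o) : f (A o) ≤ f.lfp := by
        have h := OrdinalApprox.lfpApprox_le_of_mem_fixedPoints f (x := ⊥)
          (a := f.lfp) (f.map_lfp) bot_le o
        exact (f.mono h).trans f.map_lfp.le
      have hex (s) (hs : s ∈ f.lfp) : ∃ o, s ∈ f (A o) := by
        rw [hlfp, hA] at hs
        exact hs.imp fun _ h => h.2
      choose φ h1 h2 h3 h4 using fun o => ih (Function.update X k (A o))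
      let r : S → Ordinal.{0} := fun s => sInf {o | s ∈ f (A o)}
      have hr (s) (hs : s ∈ f.lfp) : s ∈ f (A (r s)) := csInf_mem (s := {o | s ∈ f (A o)}) (hex s hs)
      have hrle (s o) (h : s ∈ f (A o)) : r s ≤ o := csInf_le' h
      have hdown (s) (hs : s ∈ f.lfp) (t) (ht : t ∈ φ (r s) s) (h : p s < k) :
          t ∈ f (A (r s)) := h3 (r s) s (hr s hs) t ht h
      have hstrict (s) (hs : s ∈ f.lfp) (t) (ht : t ∈ φ (r s) s) (h : p s = k) :
          ∃ o < r s, t ∈ f (A o) := by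
        have := h2 (r s) s (hr s hs) t ht h.ge
        rw [h, Function.update_self, hA] at this
        exact this
      refine ⟨fun s => φ (r s) s, fun s hs => h1 _ s (hr s hs), fun s hs t ht h => ?_,
        fun s hs t ht h => ?_, fun x hx hp hφ => ?_⟩
      · simpa [show p s ≠ k by omega] using h2 _ s (hr s hs) t ht (by omega)
      · rcases Nat.lt_succ_iff_lt_or_eq.1 h with h | h
        · exact hAle _ (hdown s hs t ht h)
        · obtain ⟨o, _, ho⟩ := hstrict s hs t ht h
          exact hAle _ ho
      · -- Ranks never increase along `x` and drop at priority `k`, so from the time `a` of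
        -- minimal rank on they are constant and priority `k` does not occur.
        obtain ⟨a, ha⟩ : ∃ a, ∀ n, r (x a) ≤ r (x n) :=
          ⟨Function.argmin (fun n => r (x n)), fun n => Function.argmin_le (fun n => r (x n)) n⟩
        have hlt (n) : r (x n) = r (x a) → p (x n) < k := by
          intro hn
          rcases Nat.lt_succ_iff_lt_or_eq.1 (hp n) with h | h
          · exact h
          · obtain ⟨o, ho, h'⟩ := hstrict _ (hx n) _ (hφ n) h
            exact absurd ((ha (n + 1)).trans (hrle _ _ h')) (by rw [← hn]; exact ho.not_ge)
        have hconst (n) : r (x (a + n)) = r (x a) := by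
          induction n with
          | zero => rfl
          | succ n ihn =>
            refine le_antisymm ?_ (ha _)
            rw [← ihn]
            exact hrle _ _ (hdown _ (hx _) _ (hφ _) (hlt _ ihn))
        refine Good.of_tail a (h4 (r (x a)) (fun n => x (a + n)) (fun n => ?_)
          (fun n => hlt _ (hconst n)) fun n => ?_)
        · have := hr _ (hx (a + n))
          rwa [hconst] at this
        · have := hφ (a + n)
          simp only [hconst] at this
          exact this

/-- `W` is a set of positions on which the player with forcing relation `Fo` has a positional
strategy that keeps the play inside `W` and satisfies the parity condition. -/
def Wins (Fo : S → Set S → Prop) (p : S → ℕ) (good : ℕ → Prop) (W : Set S) : Prop :=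
  ∃ φ : S → Set S, (∀ s ∈ W, Fo s (φ s)) ∧ (∀ s ∈ W, φ s ⊆ W) ∧
    ∀ x : ℕ → S, (∀ n, x n ∈ W) → (∀ n, x (n + 1) ∈ φ (x n)) → Good good (p ∘ x)

lemma wins_fix (Fo : Forcing S) (p : S → ℕ) (good : ℕ → Prop) {k : ℕ} (hk : ∀ s, p s < k)
    (X : ℕ → Set S) : Wins (fun s Y => Fo s Y) p good (fix Fo p good k X) := by
  obtain ⟨φ, h1, _, h3, h4⟩ := exists_strategy Fo p good k X
  exact ⟨φ, h1, fun s hs t ht => h3 s hs t ht (hk s), fun x hx => h4 x hx fun n => hk _⟩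

/-- Parity games with bounded priorities are determined whenever they are determined at every
single position. -/
theorem determined (Fo Fo' : S → Set S → Prop) (hmono : ∀ s, Monotone (Fo s))
    (hdet : ∀ s X, ¬ Fo s Xᶜ → Fo' s X) (p : S → ℕ) (good : ℕ → Prop) {k : ℕ}
    (hk : ∀ s, p s < k) :
    ∃ W W', Wins Fo p good W ∧ Wins Fo' p (fun m => ¬ good m) W' ∧ ∀ s, s ∈ W ∨ s ∈ W' := by
  let Fo₁ : Forcing S := fun s => ⟨Fo s, hmono s⟩
  refine ⟨fix Fo₁ p good k fun _ => ∅, fix (dual Fo₁) p (fun m => ¬ good m) k fun _ => ∅ᶜ,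
    wins_fix Fo₁ p good hk _, ?_, fun s => ?_⟩
  · obtain ⟨φ, h1, h2, h3⟩ := wins_fix (dual Fo₁) p (fun m => ¬ good m) hk fun _ => ∅ᶜ
    exact ⟨φ, fun s hs => hdet _ _ (h1 s hs), h2, h3⟩
  · exact or_iff_not_imp_left.2 fun h => compl_fix_le Fo₁ p good k _ h

end Parity

namespace Bid

/-! ### Reduction of the Müller condition to a parity condition -/

section Recent

variable {V : Type}

/-- The vertices occurring on the vertex path `l ++ [v]` after the last occurrence of `v` in `l`
(on the whole path if there is none). -/
def recent (l : List V) (v : V) : Set V :=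
  {u | ∃ k : ℕ, (l ++ [v])[k]? = some u ∧ ∀ j, k ≤ j → j < l.length → l[j]? ≠ some v}

lemma mem_recent_path (q : ℕ → V) (n : ℕ) (u : V) :
    u ∈ recent ((List.range n).map q) (q n) ↔
      ∃ k ≤ n, q k = u ∧ ∀ j, k ≤ j → j < n → q j ≠ q n := by
  have h : (List.range n).map q ++ [q n] = (List.range (n + 1)).map q := by
    simp [List.range_succ]
  unfold recent
  rw [h]
  simp only [Set.mem_ofPred_eq]
  refine exists_congr fun k => ?_
  by_cases hk : k < n + 1
  · rw [List.getElem?_map, List.getElem?_range hk]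
    simp only [Option.map_some, Option.some.injEq, List.length_map, List.length_range,
      Nat.lt_succ_iff.1 hk, true_and]
    refine and_congr_right fun _ => forall_congr' fun j => imp_congr_right fun _ =>
      forall_congr' fun hj => ?_
    rw [List.getElem?_map, List.getElem?_range hj]
    simp
  · have : ¬ k ≤ n := by omega
    simp [this, hk]

/-- The set of vertices that `q` visits infinitely often. -/
def infSet (q : ℕ → V) : Set V := {u | ∀ m : ℕ, ∃ n ≥ m, q n = u}

lemma eventually_mem_infSet [Finite V] (q : ℕ → V) : ∃ M, ∀ n ≥ M, q n ∈ infSet q := by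
  have h (v : V) : ∃ M, v ∉ infSet q → ∀ n ≥ M, q n ≠ v := by
    by_cases hv : v ∈ infSet q
    · exact ⟨0, fun h => absurd hv h⟩
    · simp only [infSet, Set.mem_ofPred_eq] at hv
      push Not at hv
      exact hv.imp fun _ h _ => h
  choose M hM using h
  obtain ⟨B, hB⟩ := (Set.finite_range M).bddAbove
  refine ⟨B, fun n hn => ?_⟩
  by_contra h
  exact hM (q n) h n ((hB ⟨q n, rfl⟩).trans hn) rfl

lemma eventually_recent_subset [Finite V] (q : ℕ → V) :
    ∃ a, ∀ n ≥ a, recent ((List.range n).map q) (q n) ⊆ infSet q := by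
  obtain ⟨M, hM⟩ := eventually_mem_infSet q
  have h (v : V) : ∃ t, v ∈ infSet q → M ≤ t ∧ q t = v := by
    by_cases hv : v ∈ infSet q
    · exact (hv M).imp fun _ h _ => h
    · exact ⟨0, fun h => absurd h hv⟩
  choose t ht using h
  obtain ⟨B, hB⟩ := (Set.finite_range t).bddAbove
  refine ⟨max M (B + 1), fun n hn u hu => ?_⟩
  obtain ⟨k, hk, rfl, hne⟩ := (mem_recent_path q n u).1 hu
  refine hM k ?_
  obtain ⟨h1, h2⟩ := ht (q n) (hM n (le_of_max_le_left hn))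
  have h3 : t (q n) ≤ B := hB ⟨_, rfl⟩
  have h4 : B + 1 ≤ n := le_of_max_le_right hn
  by_contra hlt
  exact hne (t (q n)) (by omega) (by omega) h2

lemma frequently_recent_eq [Finite V] (q : ℕ → V) (a : ℕ) :
    ∃ n ≥ a, recent ((List.range n).map q) (q n) = infSet q := by
  obtain ⟨a', ha'⟩ := eventually_recent_subset q
  have h (v : V) : ∃ t, v ∈ infSet q → max a a' ≤ t ∧ q t = v ∧
      ∀ j, max a a' ≤ j → j < t → q j ≠ v := by
    classical
    by_cases hv : v ∈ infSet q
    · refine ⟨Nat.find (hv (max a a')), fun _ => ⟨(Nat.find_spec (hv (max a a'))).1,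
        (Nat.find_spec (hv (max a a'))).2, fun j hj hlt hq => ?_⟩⟩
      exact Nat.find_min (hv (max a a')) hlt ⟨hj, hq⟩
    · exact ⟨0, fun h => absurd h hv⟩
  choose t ht using h
  have hne : (infSet q).Nonempty := by
    obtain ⟨M, hM⟩ := eventually_mem_infSet q
    exact ⟨_, hM M le_rfl⟩
  -- `v` is the vertex of `infSet q` whose first visit after time `max a a'` is the latest.
  obtain ⟨v, hv, hmax⟩ := Set.exists_max_image (infSet q) t (Set.toFinite _) hne
  obtain ⟨h1, h2, h3⟩ := ht v hv
  refine ⟨t v, le_of_max_le_left h1, (ha' _ (le_of_max_le_right h1)).antisymm fun u hu => ?_⟩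
  obtain ⟨g1, g2, _⟩ := ht u hu
  refine (mem_recent_path q _ u).2 ⟨t u, hmax u hu, g2, fun j hj hlt => ?_⟩
  rw [h2]
  exact h3 j (g1.trans hj) hlt

open Classical in
/-- The priority of a set of recently visited vertices: even if and only if the set is in `F`, and
larger for a larger set. -/
noncomputable def prio (F : Set (Set V)) (H : Set V) : ℕ :=
  2 * H.ncard + if H ∈ F then 0 else 1

lemma even_prio (F : Set (Set V)) (H : Set V) : Even (prio F H) ↔ H ∈ F := by
  unfold prio
  split_ifs with h <;> simp [h]

lemma prio_le [Finite V] (F : Set (Set V)) {H I : Set V} (h : H ⊆ I) : prio F H ≤ prio F I := by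
  rcases h.eq_or_ssubset with rfl | h
  · rfl
  · have := Set.ncard_lt_ncard h (Set.toFinite _)
    unfold prio
    split_ifs <;> omega

lemma prio_lt [Finite V] (F : Set (Set V)) (H : Set V) : prio F H < 2 * Nat.card V + 2 := by
  have := Set.ncard_le_card H
  unfold prio
  split_ifs <;> omega

lemma good_iff [Finite V] (F : Set (Set V)) (good : ℕ → Prop) (q : ℕ → V) :
    Parity.Good good (fun n => prio F (recent ((List.range n).map q) (q n))) ↔
      good (prio F (infSet q)) := by
  obtain ⟨a, ha⟩ := eventually_recent_subset q
  have hle (n) (hn : n ≥ a) := prio_le F (ha n hn)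
  constructor
  · rintro ⟨m, hm, hinf, a', hle'⟩
    obtain ⟨n, hn, h⟩ := hinf a
    obtain ⟨n', hn', h'⟩ := frequently_recent_eq q a'
    have h1 := hle n hn
    have h2 := hle' n' hn'
    simp only [h, h'] at h1 h2
    rwa [← le_antisymm h1 h2]
  · exact fun h => ⟨_, h, fun b => (frequently_recent_eq q b).imp fun n hn => ⟨hn.1, congrArg (prio F) hn.2⟩,
      a, hle⟩

end Recent

/-! ### A single bidding -/

/-- `A a` says that a bid `a` of the player who wins ties is a success for him if it wins the
bidding, and `D b` says the same for a bid `b` of his opponent. -/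
lemma bid_or_bid (A D : ℕ → Prop) (m n : ℕ) :
    (∃ a ≤ m, A a ∧ ∀ b ≤ n, a < b → ¬ D b) ∨
      ∃ b ≤ n, (b = 0 ∨ D b) ∧ ∀ a ≤ m, b ≤ a → ¬ A a := by
  classical
  rw [or_iff_not_imp_left]
  intro h
  push Not at h
  -- The opponent makes the highest of his bids that would be a success, or `0`.
  refine ⟨Nat.findGreatest D n, Nat.findGreatest_le n, ?_, fun a ha hle hA => ?_⟩
  · exact or_iff_not_imp_left.2 fun h => Nat.findGreatest_of_ne_zero rfl h
  · obtain ⟨b, hb, hab, hD⟩ := h a ha hA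
    exact Nat.findGreatest_is_greatest (hle.trans_lt hab) hb hD

section Game

variable {V : Type} (T : TieTransducerUA V) (E : V → V → Prop)

/-- The winner of a bidding in which Player `i` bids `b` and his opponent bids `b'`. -/
def winner (i : Fin 2) (q : T.Q) (b b' : ℕ) : Fin 2 :=
  if b' < b then i else if b < b' then 1 - i else T.Γ q

/-- The configuration after Player `w` wins the bidding with bid `b` and moves to `d`. Whether the
bidding was tied does not matter, as the transducer is un-aware of ties. -/
def after (c : Conf V T.Q) (w : Fin 2) (b : ℕ) (d : V) : Conf V T.Q where
  v := d
  B1 := if w = 0 then c.B1 - b else c.B1 + b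
  B2 := if w = 0 then c.B2 + b else c.B2 - b
  s := T.δ c.s d w b

/-- Player `i` has a bid in `c` with which he can ensure that the next configuration is in `X`. -/
def Force (i : Fin 2) (c : Conf V T.Q) (X : Set (Conf V T.Q)) : Prop :=
  ∃ b ≤ budget i c, ∀ b' ≤ budget (1 - i) c,
    if winner T i c.s b b' = i then ∃ d, E c.v d ∧ after T c i b d ∈ X
    else ∀ d, E c.v d → after T c (1 - i) b' d ∈ X

lemma Force.mono {i : Fin 2} {c : Conf V T.Q} {X Y : Set (Conf V T.Q)} (hXY : X ⊆ Y)
    (h : Force T E i c X) : Force T E i c Y := by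
  obtain ⟨b, hb, h⟩ := h
  refine ⟨b, hb, fun b' hb' => ?_⟩
  have := h b' hb'
  split_ifs at this ⊢
  · exact this.imp fun d hd => ⟨hd.1, hXY hd.2⟩
  · exact fun d hd => hXY (this d hd)

lemma force_or_force (c : Conf V T.Q) (X : Set (Conf V T.Q)) (h : ¬ Force T E 0 c Xᶜ) :
    Force T E 1 c X := by
  let A : ℕ → Prop := fun b => ∃ d, E c.v d ∧ after T c 0 b d ∈ Xᶜ
  let D : ℕ → Prop := fun b => ∃ d, E c.v d ∧ after T c 1 b d ∈ X
  have hA (b) (hb : ¬ A b) (d) (hd : E c.v d) : after T c 0 b d ∈ X := by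
    by_contra hX; exact hb ⟨d, hd, hX⟩
  have hD (b) (hb : ¬ D b) (d) (hd : E c.v d) : after T c 1 b d ∈ Xᶜ :=
    fun hX => hb ⟨d, hd, hX⟩
  obtain hΓ | hΓ : T.Γ c.s = 0 ∨ T.Γ c.s = 1 := by
    generalize T.Γ c.s = g
    fin_cases g <;> simp
  · rcases bid_or_bid A D c.B1 c.B2 with ⟨a, ha, h1, h2⟩ | ⟨b, hb, h1, h2⟩
    · refine absurd ⟨a, ha, fun b' hb' => ?_⟩ h
      split_ifs with hw
      · exact h1
      · refine hD b' (h2 b' hb' ?_)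
        by_contra hlt
        exact hw (by unfold winner; split_ifs <;> simp_all)
    · refine ⟨b, hb, fun b' hb' => ?_⟩
      split_ifs with hw
      · refine h1.resolve_left ?_
        rintro rfl
        simp [winner, hΓ] at hw
      · refine hA b' (h2 b' hb' ?_)
        by_contra hlt
        exact hw (by unfold winner; rw [if_pos (by omega)])
  · rcases bid_or_bid D A c.B2 c.B1 with ⟨b, hb, h1, h2⟩ | ⟨a, ha, h1, h2⟩
    · refine ⟨b, hb, fun b' hb' => ?_⟩
      split_ifs with hw
      · exact h1
      · refine hA b' (h2 b' hb' ?_)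
        by_contra hlt
        exact hw (by unfold winner; split_ifs <;> simp_all)
    · refine absurd ⟨a, ha, fun b' hb' => ?_⟩ h
      split_ifs with hw
      · refine h1.resolve_left ?_
        rintro rfl
        simp [winner, hΓ] at hw
      · refine hD b' (h2 b' hb' ?_)
        by_contra hlt
        exact hw (by unfold winner; rw [if_pos (by omega)])

/-! ### From the arena of vertex histories to strategies in the bidding game -/

/-- A position of the arena: the vertices visited so far and the current configuration. Bids are
not recorded, since a single bidding is not determined with respect to sets of outcomes
that distinguish between bids leading to the same configuration. -/
abbrev Pos := List V × Conf V T.Q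

/-- Player `i` can ensure that the position after `s` is in `X`. -/
def PosForce (i : Fin 2) (s : Pos T) (X : Set (Pos T)) : Prop :=
  Force T E i s.2 {c | (s.1 ++ [s.2.v], c) ∈ X}

/-- The priority of a position in the parity game. -/
noncomputable def posPrio (F : Set (Set V)) (s : Pos T) : ℕ := prio F (recent s.1 s.2.v)

variable (hsucc : ∀ v, ∃ u, E v u) (N : ℕ) (obj : (ℕ → V) → Prop)

/-- The bidding game with ties resolved by `T`. -/
abbrev uaGame : Game V := ⟨E, hsucc, N, T.mech, obj⟩

/-- The position that corresponds to a history and a current configuration. -/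
def pos (x : Hist V T.Q × Conf V T.Q) : Pos T := (x.1.map fun r => r.1.v, x.2)

/-- The play of the strategies `σ` of Player `i` and `τ` of his opponent. -/
def play (i : Fin 2) (σ τ : Strat V T.mech) (c : Conf V T.Q) (n : ℕ) : Hist V T.Q × Conf V T.Q :=
  if i = 0 then playAux (uaGame T E hsucc N obj) σ τ c n
  else playAux (uaGame T E hsucc N obj) τ σ c n

lemma nextConf_eq (c : Conf V T.Q) (b1 b2 : ℕ) (tie : Bool) (w : Fin 2) (d : V) :
    nextConf (uaGame T E hsucc N obj) c b1 b2 tie w d =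
      after T c w (if w = 0 then b1 else b2) d := by
  unfold nextConf after
  split_ifs <;> rfl

lemma play_zero (i : Fin 2) (σ τ : Strat V T.mech) (c : Conf V T.Q) :
    play T E hsucc N obj i σ τ c 0 = ([], c) := by
  fin_cases i <;> rfl

lemma play_succ {i : Fin 2} {σ τ : Strat V T.mech} (hσ : Legal (uaGame T E hsucc N obj) i σ)
    (hτ : Legal (uaGame T E hsucc N obj) (1 - i) τ) (c : Conf V T.Q) (n : ℕ) :
    let x := play T E hsucc N obj i σ τ c n
    let y := play T E hsucc N obj i σ τ c (n + 1)
    (pos T y).1 = (pos T x).1 ++ [x.2.v] ∧ ∃ b1 b2,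
      y.2 = if winner T i x.2.s (σ.bid x.1 x.2) (τ.bid x.1 x.2) = i then
          after T x.2 i (σ.bid x.1 x.2) (σ.move x.1 x.2 b1 b2)
        else after T x.2 (1 - i) (τ.bid x.1 x.2) (τ.move x.1 x.2 b1 b2) := by
  have e1 (h c b) : σ.choice h c b = T.Γ c.s := hσ.2.1 h c b
  have e2 (h c b) : τ.choice h c b = T.Γ c.s := hτ.2.1 h c b
  intro x y
  fin_cases i
  · have hy : y = stepPlay (uaGame T E hsucc N obj) σ τ x := rfl
    rw [hy]
    refine ⟨List.map_append, σ.bid x.1 x.2, τ.bid x.1 x.2, ?_⟩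
    simp only [stepPlay, nextConf_eq, e1, e2, ite_self, winner, Fin.zero_eta]
    generalize T.Γ x.2.s = g
    fin_cases g <;> split_ifs <;> simp_all
  · have hy : y = stepPlay (uaGame T E hsucc N obj) τ σ x := rfl
    rw [hy]
    refine ⟨List.map_append, τ.bid x.1 x.2, σ.bid x.1 x.2, ?_⟩
    simp only [stepPlay, nextConf_eq, e1, e2, ite_self, winner, Fin.mk_one]
    generalize T.Γ x.2.s = g
    fin_cases g <;> split_ifs <;> first | omega | simp_all

lemma pos_play_fst {i : Fin 2} {σ τ : Strat V T.mech} (hσ : Legal (uaGame T E hsucc N obj) i σ)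
    (hτ : Legal (uaGame T E hsucc N obj) (1 - i) τ) (c : Conf V T.Q) (n : ℕ) :
    (pos T (play T E hsucc N obj i σ τ c n)).1 =
      (List.range n).map fun k => (play T E hsucc N obj i σ τ c k).2.v := by
  induction n with
  | zero => rw [play_zero]; rfl
  | succ n ih =>
    rw [(play_succ T E hsucc N obj hσ hτ c n).1, ih, List.range_succ, List.map_append]
    rfl

/-- A positional strategy on the arena of vertex histories yields a strategy in the
bidding game. -/
lemma exists_strat [Finite V] (F : Set (Set V)) (i : Fin 2) (good : ℕ → Prop) {W : Set (Pos T)}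
    (hW : Parity.Wins (PosForce T E i) (posPrio T F) good W) (c : Conf V T.Q) (hc : ([], c) ∈ W) :
    ∃ σ, Legal (uaGame T E hsucc N obj) i σ ∧ ∀ τ, Legal (uaGame T E hsucc N obj) (1 - i) τ →
      good (prio F (infSet fun n => (play T E hsucc N obj i σ τ c n).2.v)) := by
  classical
  obtain ⟨φ, h1, h2, h3⟩ := hW
  have hbid (s : Pos T) : ∃ b ≤ budget i s.2, s ∈ W → ∀ b' ≤ budget (1 - i) s.2,
      if winner T i s.2.s b b' = i then
        ∃ d, E s.2.v d ∧ (s.1 ++ [s.2.v], after T s.2 i b d) ∈ φ s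
      else ∀ d, E s.2.v d → (s.1 ++ [s.2.v], after T s.2 (1 - i) b' d) ∈ φ s := by
    by_cases hs : s ∈ W
    · obtain ⟨b, hb, h⟩ := h1 s hs
      exact ⟨b, hb, fun _ => h⟩
    · exact ⟨0, Nat.zero_le _, fun h => absurd h hs⟩
  choose bid hbid hspec using hbid
  have hmove (s : Pos T) : ∃ d, E s.2.v d ∧
      ((∃ d, E s.2.v d ∧ (s.1 ++ [s.2.v], after T s.2 i (bid s) d) ∈ φ s) →
        (s.1 ++ [s.2.v], after T s.2 i (bid s) d) ∈ φ s) := by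
    by_cases h : ∃ d, E s.2.v d ∧ (s.1 ++ [s.2.v], after T s.2 i (bid s) d) ∈ φ s
    · obtain ⟨d, hd, hd'⟩ := h
      exact ⟨d, hd, fun _ => hd'⟩
    · obtain ⟨d, hd⟩ := hsucc s.2.v
      exact ⟨d, hd, fun h' => absurd h' h⟩
  choose move hmove hmove' using hmove
  let σ : Strat V T.mech :=
    ⟨fun h c => bid (pos T (h, c)), fun _ c _ => T.Γ c.s, fun h c _ _ => move (pos T (h, c))⟩
  have hσ : Legal (uaGame T E hsucc N obj) i σ :=
    ⟨fun h c => hbid (pos T (h, c)), fun h c b => rfl, fun h c _ _ => hmove (pos T (h, c))⟩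
  refine ⟨σ, hσ, fun τ hτ => ?_⟩
  let x : ℕ → Hist V T.Q × Conf V T.Q := play T E hsucc N obj i σ τ c
  have hstep (n) (hn : pos T (x n) ∈ W) : pos T (x (n + 1)) ∈ φ (pos T (x n)) := by
    obtain ⟨hl, b1, b2, hx⟩ := play_succ T E hsucc N obj hσ hτ c n
    have hy : pos T (x (n + 1)) = ((pos T (x n)).1 ++ [(x n).2.v], (x (n + 1)).2) :=
      Prod.ext hl rfl
    rw [hy]
    have hforce : if winner T i (x n).2.s (bid (pos T (x n))) (τ.bid (x n).1 (x n).2) = i then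
        ∃ d, E (x n).2.v d ∧
          ((pos T (x n)).1 ++ [(x n).2.v], after T (x n).2 i (bid (pos T (x n))) d) ∈ φ (pos T (x n))
        else ∀ d, E (x n).2.v d → ((pos T (x n)).1 ++ [(x n).2.v],
          after T (x n).2 (1 - i) (τ.bid (x n).1 (x n).2) d) ∈ φ (pos T (x n)) :=
      hspec _ hn (τ.bid (x n).1 (x n).2) (hτ.1 _ _)
    have hconf : (x (n + 1)).2 =
        if winner T i (x n).2.s (bid (pos T (x n))) (τ.bid (x n).1 (x n).2) = i then
          after T (x n).2 i (bid (pos T (x n))) (move (pos T (x n)))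
        else after T (x n).2 (1 - i) (τ.bid (x n).1 (x n).2) (τ.move (x n).1 (x n).2 b1 b2) := hx
    rw [hconf]
    by_cases hw : winner T i (x n).2.s (bid (pos T (x n))) (τ.bid (x n).1 (x n).2) = i
    · rw [if_pos hw] at hforce ⊢
      exact hmove' _ hforce
    · rw [if_neg hw] at hforce ⊢
      exact hforce _ (hτ.2.2 _ _ _ _)
  have hmem (n) : pos T (x n) ∈ W := by
    induction n with
    | zero =>
      rw [show x 0 = ([], c) from play_zero T E hsucc N obj i σ τ c]
      exact hc
    | succ n ih => exact h2 _ ih (hstep n ih)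
  have hgood := h3 _ hmem fun n => hstep n (hmem n)
  refine (good_iff F good _).1 ?_
  convert hgood using 2 with n
  simp only [Function.comp, posPrio]
  rw [pos_play_fst T E hsucc N obj hσ hτ]
  rfl

end Game

end Bid

open Bid in
/-- Every discrete bidding game with a Müller objective whose
ties are resolved by a transducer that is un-aware of ties is determined: from
every configuration, either Player 1 or Player 2 has a winning strategy. -/
theorem stmt_9 {V : Type} [Fintype V] (T : TieTransducerUA V) (hQ : Finite T.Q)
    (E : V → V → Prop) (hsucc : ∀ v, ∃ u, E v u) (N : ℕ) (F : Set (Set V)) :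
    let G : Game V := ⟨E, hsucc, N, T.mech,
      fun p => {u : V | ∀ m : ℕ, ∃ n ≥ m, p n = u} ∈ F⟩
    ∀ c : Conf V T.Q, c.B1 + c.B2 = N → HasWin G 0 c ∨ HasWin G 1 c := by
  intro G c _
  obtain ⟨W, W', hW, hW', hcov⟩ := Parity.determined (PosForce T E 0) (PosForce T E 1)
    (fun s X Y h => Force.mono T E fun c hc => h hc)
    (fun s X h => force_or_force T E s.2 _ h) (posPrio T F) Even (fun s => prio_lt F _)
  refine (hcov ([], c)).imp (fun hc => ?_) fun hc => ?_
  · obtain ⟨σ, hσ, h⟩ := exists_strat T E hsucc N G.obj F 0 Even hW c hc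
    refine ⟨σ, hσ, fun τ hτ => ?_⟩
    rw [if_pos rfl]
    exact (even_prio F _).1 (h τ hτ)
  · obtain ⟨σ, hσ, h⟩ := exists_strat T E hsucc N G.obj F 1 _ hW' c hc
    refine ⟨σ, hσ, fun τ hτ => ?_⟩
    rw [if_neg one_ne_zero]
    exact fun hobj => h τ hτ ((even_prio F _).2 hobj)
end

section
/- If every discrete reachability bidding game with random-based tie-breaking that is played on a DAG is determined (val1 = val2 at every configuration), then every discrete reachability bidding game with random-based tie-breaking is determined (val1 = val2 at every configuration). -/
/-!
The unbounded objective is approximated by its finite-horizon versions. For a horizon `n`, the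
unrolling `unroll G n` of `G` records the time in the vertex and sends the token to the sink `t1`
as soon as a target vertex has been seen, and to `t2` when time `n` passes without one. It is
played on a DAG, and strategies can be transported between `G` and `unroll G n` in such a way that
the plays correspond (`Sim`, `wins_unroll_iff`). Hence, writing `Pr_n` for the probability that
Player 1 wins within `n` rounds,

`inf_σ2 sup_σ1 Pr_n ≤ val2 (unroll G n) = val1 (unroll G n) ≤ val1 G`   for every `n`,

the equality being the hypothesis on DAGs.

It remains to exchange `inf_σ2` with the supremum over `n`. The legal strategies of Player 2 form a
product of finite sets, which is compact. For a fixed `σ1`, the probability `Pr_n` is a locally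
constant function of `σ2`, because only finitely many histories of length at most `n` are
consistent with a given pair of strategies. So for `r > val1 G` the sets
`{σ2 | ∀ σ1, Pr_n σ1 σ2 ≤ r}` are closed, nonempty and decreasing in `n`; a strategy in their
intersection guarantees `Pr ≤ r` by continuity of `μ` from below, and `val2 G ≤ r` follows.
-/

/-! # Discrete reachability bidding games with random-based tie-breaking -/

namespace RBid

open MeasureTheory

/-- A discrete reachability bidding game with random-based tie-breaking: a
finite directed graph in which every vertex has an outgoing edge, a total
budget `N`, and a target set for Player 1 (Player 1 is `0 : Fin 2`, Player 2
is `1 : Fin 2`). -/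
structure Game (V : Type) where
  E : V → V → Prop
  succ_exists : ∀ v, ∃ u, E v u
  N : ℕ
  target : Set V

/-- A configuration: token position and the two budgets. -/
structure Conf (V : Type) where
  v : V
  B1 : ℕ
  B2 : ℕ

/-- A round as recorded in histories: configuration, the two bids, and the
winner of the bidding. -/
abbrev Round (V : Type) := Conf V × ℕ × ℕ × Fin 2

abbrev Hist (V : Type) := List (Round V)

/-- A pure strategy: a bid for each history and configuration, and a successor
choice upon winning a bidding. -/
structure Strat (V : Type) where
  bid : Hist V → Conf V → ℕ
  move : Hist V → Conf V → ℕ → ℕ → V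

def Legal {V : Type} (G : Game V) (i : Fin 2) (σ : Strat V) : Prop :=
  (∀ h c, σ.bid h c ≤ (if i = 0 then c.B1 else c.B2)) ∧
  (∀ h c b1 b2, G.E c.v (σ.move h c b1 b2))

/-- One round of the play: `ω k` resolves the `k`-th tie (the third component
of the state counts the ties seen so far). -/
def stepPlay {V : Type} (G : Game V) (σ1 σ2 : Strat V) (ω : ℕ → Fin 2)
    (p : Hist V × Conf V × ℕ) : Hist V × Conf V × ℕ :=
  let h := p.1
  let c := p.2.1
  let k := p.2.2
  let b1 := σ1.bid h c
  let b2 := σ2.bid h c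
  let w : Fin 2 := if b2 < b1 then 0 else if b1 < b2 then 1 else ω k
  let d := if w = 0 then σ1.move h c b1 b2 else σ2.move h c b1 b2
  let c' : Conf V :=
    if w = 0 then ⟨d, c.B1 - b1, c.B2 + b1⟩ else ⟨d, c.B1 + b2, c.B2 - b2⟩
  (h ++ [(c, b1, b2, w)], c', if b1 = b2 then k + 1 else k)

def playAux {V : Type} (G : Game V) (σ1 σ2 : Strat V) (ω : ℕ → Fin 2)
    (c0 : Conf V) : ℕ → Hist V × Conf V × ℕ
  | 0 => ([], c0, 0)
  | n + 1 => stepPlay G σ1 σ2 ω (playAux G σ1 σ2 ω c0 n)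

/-- The vertex path of the play of `σ1` against `σ2` from `c0`, with ties
resolved by `ω`. -/
def path {V : Type} (G : Game V) (σ1 σ2 : Strat V) (ω : ℕ → Fin 2)
    (c0 : Conf V) (n : ℕ) : V :=
  (playAux G σ1 σ2 ω c0 n).2.1.v

/-- Player 1 wins the play determined by `σ1, σ2, ω` from `c0`: the vertex
path visits the target. -/
def Wins {V : Type} (G : Game V) (σ1 σ2 : Strat V) (ω : ℕ → Fin 2)
    (c0 : Conf V) : Prop :=
  ∃ n, path G σ1 σ2 ω c0 n ∈ G.target

/-- `μ` is the fair Bernoulli product measure on `{1,2}^ℕ` (here `Fin 2`-valued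
sequences, whose `k`-th entry resolves the `k`-th tie): the measure of every
cylinder constraining finitely many coordinates is `(1/2)^(number of
constrained coordinates)`. -/
def IsCoin (μ : Measure (ℕ → Fin 2)) : Prop :=
  ∀ (s : Finset ℕ) (f : ℕ → Fin 2),
    μ {ω | ∀ k ∈ s, ω k = f k} = (1 / 2 : ENNReal) ^ s.card

/-- The probability that Player 1 wins the game from `c` when the players use
the pure strategies `σ1, σ2` and ties are resolved by independent fair coin
flips (`μ` being the fair Bernoulli product measure). -/
noncomputable def Pr {V : Type} (μ : Measure (ℕ → Fin 2)) (G : Game V)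
    (σ1 σ2 : Strat V) (c : Conf V) : ENNReal :=
  μ {ω | Wins G σ1 σ2 ω c}

/-- `val1`: the value Player 1 can guarantee when revealing his pure strategy
first. -/
noncomputable def val1 {V : Type} (μ : Measure (ℕ → Fin 2)) (G : Game V)
    (c : Conf V) : ENNReal :=
  ⨆ σ1 : {σ : Strat V // Legal G 0 σ}, ⨅ σ2 : {σ : Strat V // Legal G 1 σ},
    Pr μ G σ1.1 σ2.1 c

/-- `val2`: the value when Player 2 reveals his pure strategy first. -/
noncomputable def val2 {V : Type} (μ : Measure (ℕ → Fin 2)) (G : Game V)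
    (c : Conf V) : ENNReal :=
  ⨅ σ2 : {σ : Strat V // Legal G 1 σ}, ⨆ σ1 : {σ : Strat V // Legal G 0 σ},
    Pr μ G σ1.1 σ2.1 c

/-- `G` is played on a DAG with sinks `t1` (the target) and `t2`: the only
outgoing edges of `t1` and `t2` are self-loops, no other vertex lies on a
cycle, and the target set is `{t1}`. -/
def IsDAG {V : Type} (G : Game V) (t1 t2 : V) : Prop :=
  (∀ u, G.E t1 u ↔ u = t1) ∧ (∀ u, G.E t2 u ↔ u = t2) ∧ t1 ≠ t2 ∧
    (∀ v, v ≠ t1 → v ≠ t2 → ¬ Relation.TransGen G.E v v) ∧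
    G.target = {t1}

end RBid

namespace RBid

open MeasureTheory

variable {V : Type}

/-! ### Finite horizons -/

/-- Player 1 wins the play within the first `n` rounds. -/
def WinsBy (G : Game V) (σ1 σ2 : Strat V) (ω : ℕ → Fin 2) (c0 : Conf V) (n : ℕ) : Prop :=
  ∃ k ≤ n, path G σ1 σ2 ω c0 k ∈ G.target

/-- It suffices to bound the finite-horizon winning probabilities. -/
theorem pr_le_of_winsBy (μ : Measure (ℕ → Fin 2)) (G : Game V) (σ1 σ2 : Strat V) (c : Conf V)
    (r : ENNReal) (h : ∀ n, μ {ω | WinsBy G σ1 σ2 ω c n} ≤ r) : Pr μ G σ1 σ2 c ≤ r := by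
  have hU : {ω | Wins G σ1 σ2 ω c} = ⋃ n, {ω | WinsBy G σ1 σ2 ω c n} := by
    ext ω
    simp only [Set.mem_ofPred_eq, Set.mem_iUnion, Wins, WinsBy]
    exact ⟨fun ⟨n, hn⟩ => ⟨n, n, le_rfl, hn⟩, fun ⟨_, k, _, hk⟩ => ⟨k, hk⟩⟩
  have hmono : Monotone fun n => {ω | WinsBy G σ1 σ2 ω c n} :=
    fun m n hmn ω ⟨k, hk, hT⟩ => ⟨k, hk.trans hmn, hT⟩
  rw [Pr, hU, hmono.measure_iUnion]
  exact iSup_le h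

theorem winsBy_le_pr (μ : Measure (ℕ → Fin 2)) (G : Game V) (σ1 σ2 : Strat V) (c : Conf V)
    (n : ℕ) : μ {ω | WinsBy G σ1 σ2 ω c n} ≤ Pr μ G σ1 σ2 c :=
  measure_mono fun _ ⟨k, _, hk⟩ => ⟨k, hk⟩

theorem length_playAux (G : Game V) (σ1 σ2 : Strat V) (ω : ℕ → Fin 2) (c : Conf V) (k : ℕ) :
    (playAux G σ1 σ2 ω c k).1.length = k := by
  induction k with
  | zero => rfl
  | succ k ih => simp [playAux, stepPlay, ih]

theorem edge_path (G : Game V) (σ1 σ2 : Strat V) (h1 : Legal G 0 σ1) (h2 : Legal G 1 σ2)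
    (ω : ℕ → Fin 2) (c : Conf V) (k : ℕ) :
    G.E (path G σ1 σ2 ω c k) (path G σ1 σ2 ω c (k + 1)) := by
  simp only [path, playAux, stepPlay]
  generalize (playAux G σ1 σ2 ω c k) = p
  split_ifs
  all_goals first | exact h1.2 _ _ _ _ | exact h2.2 _ _ _ _

/-! ### Unrolling a game into a DAG -/

/-- The edges of the unrolling of `G` to horizon `n`. The vertex `inr (v, k)` stands for the token
being on `v` at time `k`; `inl true` and `inl false` are the sinks `t1` and `t2`. -/
def unrollE (G : Game V) (n : ℕ) : Bool ⊕ V × Fin (n + 1) → Bool ⊕ V × Fin (n + 1) → Prop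
  | .inl b, y => y = .inl b
  | .inr (v, _), .inl true => v ∈ G.target
  | .inr (v, k), .inl false => v ∉ G.target ∧ k.val = n
  | .inr (v, k), .inr (u, l) => v ∉ G.target ∧ G.E v u ∧ l.val = k.val + 1

/-- The unrolling of `G` to horizon `n`. -/
def unroll (G : Game V) (n : ℕ) : Game (Bool ⊕ V × Fin (n + 1)) where
  E := unrollE G n
  succ_exists := by
    rintro (b | ⟨v, k⟩)
    · exact ⟨.inl b, rfl⟩
    · by_cases hv : v ∈ G.target
      · exact ⟨.inl true, hv⟩
      · by_cases hk : k.val = n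
        · exact ⟨.inl false, hv, hk⟩
        · obtain ⟨u, hu⟩ := G.succ_exists v
          exact ⟨.inr (u, ⟨k.val + 1, by omega⟩), hv, hu, rfl⟩
  N := G.N
  target := {.inl true}

theorem isDAG_unroll (G : Game V) (n : ℕ) : IsDAG (unroll G n) (.inl true) (.inl false) := by
  refine ⟨fun u => Iff.rfl, fun u => Iff.rfl, by simp, ?_, rfl⟩
  -- Time strictly increases along edges out of a non-sink vertex; sinks have time `n + 1`.
  let rank : Bool ⊕ V × Fin (n + 1) → ℕ := Sum.elim (fun _ => n + 1) fun x => x.2.val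
  have hlt : ∀ x y, (unroll G n).E (.inr x) y → rank (.inr x) < rank y := by
    rintro ⟨v, k⟩ (b | ⟨u, l⟩) h
    · exact k.2
    · have := h.2.2
      simp only [rank, Sum.elim_inr]
      omega
  have hle : ∀ x y, (unroll G n).E x y → rank x ≤ rank y := by
    rintro (b | x) y h
    · obtain rfl : y = .inl b := h
      exact le_rfl
    · exact (hlt x y h).le
  have hle' : ∀ x y, Relation.ReflTransGen (unroll G n).E x y → rank x ≤ rank y := by
    intro x y h
    induction h with
    | refl => exact le_rfl
    | tail _ h ih => exact ih.trans (hle _ _ h)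
  rintro (b | x) h1 h2 h
  · cases b <;> simp_all
  · obtain ⟨y, hxy, hyx⟩ := Relation.TransGen.head'_iff.1 h
    exact absurd (hle' _ _ hyx) (not_le.2 (hlt _ _ hxy))

/-! ### Transporting strategies -/

/-- A configuration of `G` at time `k` as a configuration of the unrolling; meaningful for
`k ≤ n` only, since `Fin.ofNat` reduces modulo `n + 1`. -/
def liftConf (n k : ℕ) (c : Conf V) : Conf (Bool ⊕ V × Fin (n + 1)) :=
  ⟨.inr (c.v, Fin.ofNat (n + 1) k), c.B1, c.B2⟩

def liftHist (n : ℕ) (h : Hist V) : Hist (Bool ⊕ V × Fin (n + 1)) :=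
  h.mapIdx fun i r => (liftConf n i r.1, r.2)

/-- The vertex of `G` underlying a vertex of the unrolling, with the arbitrary value `v0` at the
sinks. -/
def proj (n : ℕ) (v0 : V) : Bool ⊕ V × Fin (n + 1) → V :=
  Sum.elim (fun _ => v0) Prod.fst

def lowerConf (n : ℕ) (v0 : V) (c : Conf (Bool ⊕ V × Fin (n + 1))) : Conf V :=
  ⟨proj n v0 c.v, c.B1, c.B2⟩

def lowerHist (n : ℕ) (v0 : V) (h : Hist (Bool ⊕ V × Fin (n + 1))) : Hist V :=
  h.map fun r => (lowerConf n v0 r.1, r.2)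

theorem lowerHist_liftHist (n : ℕ) (v0 : V) (h : Hist V) :
    lowerHist n v0 (liftHist n h) = h := by
  apply List.ext_getElem
  · simp [lowerHist, liftHist]
  · intro i h1 h2
    simp [lowerHist, liftHist, lowerConf, liftConf, proj]

theorem length_liftHist (n : ℕ) (h : Hist V) : (liftHist n h).length = h.length := by
  simp [liftHist]

/-- `u` if it is a successor of `v`, and an arbitrary successor of `v` otherwise. -/
noncomputable def fixMove {W : Type} (G : Game W) (v u : W) : W :=
  open Classical in if G.E v u then u else (G.succ_exists v).choose

theorem fixMove_edge {W : Type} (G : Game W) (v u : W) : G.E v (fixMove G v u) := by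
  unfold fixMove
  split_ifs with h
  · exact h
  · exact (G.succ_exists v).choose_spec

theorem fixMove_eq {W : Type} (G : Game W) {v u : W} (h : G.E v u) : fixMove G v u = u :=
  if_pos h

/-- A strategy of the unrolling, played in `G`. -/
noncomputable def down (G : Game V) (n : ℕ) (v0 : V) (σ : Strat (Bool ⊕ V × Fin (n + 1))) :
    Strat V where
  bid h c := σ.bid (liftHist n h) (liftConf n h.length c)
  move h c b1 b2 :=
    fixMove G c.v (proj n v0 (σ.move (liftHist n h) (liftConf n h.length c) b1 b2))

/-- A strategy of `G`, played in the unrolling. -/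
noncomputable def up (G : Game V) (n : ℕ) (v0 : V) (σ : Strat V) :
    Strat (Bool ⊕ V × Fin (n + 1)) where
  bid h c := σ.bid (lowerHist n v0 h) (lowerConf n v0 c)
  move h c b1 b2 := fixMove (unroll G n) c.v
    (.inr (σ.move (lowerHist n v0 h) (lowerConf n v0 c) b1 b2, Fin.ofNat (n + 1) (h.length + 1)))

theorem legal_down (G : Game V) (n : ℕ) (v0 : V) (i : Fin 2)
    (σ : Strat (Bool ⊕ V × Fin (n + 1))) (hσ : Legal (unroll G n) i σ) :
    Legal G i (down G n v0 σ) :=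
  ⟨fun _ _ => hσ.1 _ _, fun _ _ _ _ => fixMove_edge _ _ _⟩

theorem legal_up (G : Game V) (n : ℕ) (v0 : V) (i : Fin 2) (σ : Strat V) (hσ : Legal G i σ) :
    Legal (unroll G n) i (up G n v0 σ) :=
  ⟨fun _ _ => hσ.1 _ _, fun _ _ _ _ => fixMove_edge _ _ _⟩

/-- The strategy `σ` of `G` and the strategy `σ'` of the unrolling act in the same way before time
`n`, as long as the token is not on a target vertex. -/
def Sim (G : Game V) (n : ℕ) (σ : Strat V) (σ' : Strat (Bool ⊕ V × Fin (n + 1))) : Prop :=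
  ∀ h c, h.length < n → c.v ∉ G.target →
    σ'.bid (liftHist n h) (liftConf n h.length c) = σ.bid h c ∧
    ∀ b1 b2, σ'.move (liftHist n h) (liftConf n h.length c) b1 b2 =
      .inr (σ.move h c b1 b2, Fin.ofNat (n + 1) (h.length + 1))

theorem sim_down (G : Game V) (n : ℕ) (v0 : V) (i : Fin 2)
    (σ : Strat (Bool ⊕ V × Fin (n + 1))) (hσ : Legal (unroll G n) i σ) :
    Sim G n (down G n v0 σ) σ := by
  intro h c hn hc
  refine ⟨rfl, fun b1 b2 => ?_⟩
  have hE := hσ.2 (liftHist n h) (liftConf n h.length c) b1 b2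
  simp only [down]
  have hk : (Fin.ofNat (n + 1) h.length).val = h.length := Nat.mod_eq_of_lt (by omega)
  rcases hm : σ.move (liftHist n h) (liftConf n h.length c) b1 b2 with (_ | _) | ⟨u, l⟩
  · rw [hm] at hE
    have h2 : (Fin.ofNat (n + 1) h.length).val = n := hE.2
    omega
  · rw [hm] at hE
    exact absurd hE hc
  · rw [hm] at hE
    obtain ⟨-, h1, h2⟩ := hE
    rw [fixMove_eq G (show G.E c.v (proj n v0 (.inr (u, l))) from h1)]
    have hl : l = Fin.ofNat (n + 1) (h.length + 1) := by
      apply Fin.ext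
      rw [h2, hk]
      exact (Nat.mod_eq_of_lt (by omega)).symm
    rw [hl]
    rfl

theorem sim_up (G : Game V) (n : ℕ) (v0 : V) (i : Fin 2) (σ : Strat V) (hσ : Legal G i σ) :
    Sim G n σ (up G n v0 σ) := by
  intro h c hn hc
  have hlow : lowerConf n v0 (liftConf n h.length c) = c := rfl
  refine ⟨by simp only [up, lowerHist_liftHist, hlow], fun b1 b2 => ?_⟩
  simp only [up, lowerHist_liftHist, hlow, length_liftHist]
  refine fixMove_eq _ ⟨hc, hσ.2 _ _ _ _, ?_⟩
  have h1 : (Fin.ofNat (n + 1) h.length).val = h.length := Nat.mod_eq_of_lt (by omega)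
  have h2 : (Fin.ofNat (n + 1) (h.length + 1)).val = h.length + 1 :=
    Nat.mod_eq_of_lt (by omega)
  omega

/-- Up to the first visit to the target, and up to time `n`, similar strategies produce
corresponding plays. -/
theorem playAux_unroll (G : Game V) (n : ℕ) {σ1 σ2 : Strat V}
    {τ1 τ2 : Strat (Bool ⊕ V × Fin (n + 1))} (h1 : Sim G n σ1 τ1) (h2 : Sim G n σ2 τ2)
    (ω : ℕ → Fin 2) (c : Conf V) (k : ℕ) (hk : k ≤ n)
    (hT : ∀ j < k, path G σ1 σ2 ω c j ∉ G.target) :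
    playAux (unroll G n) τ1 τ2 ω (liftConf n 0 c) k =
      (liftHist n (playAux G σ1 σ2 ω c k).1, liftConf n k (playAux G σ1 σ2 ω c k).2.1,
        (playAux G σ1 σ2 ω c k).2.2) := by
  induction k with
  | zero => rfl
  | succ k ih =>
    have hv := hT k (Nat.lt_succ_self k)
    have hl := length_playAux G σ1 σ2 ω c k
    simp only [playAux]
    rw [ih (by omega) fun j hj => hT j (by omega)]
    simp only [path] at hv
    generalize playAux G σ1 σ2 ω c k = p at hv hl
    obtain ⟨h, d, t⟩ := p
    simp only at hv hl
    subst hl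
    obtain ⟨hb1, hm1⟩ := h1 h d (by omega) hv
    obtain ⟨hb2, hm2⟩ := h2 h d (by omega) hv
    simp only [stepPlay, hb1, hb2, hm1, hm2]
    refine Prod.ext ?_ (Prod.ext ?_ rfl)
    · simp [liftHist, List.mapIdx_concat]
    · simp only [liftConf]
      split_ifs <;> rfl

theorem wins_unroll_iff (G : Game V) (n : ℕ) {σ1 σ2 : Strat V}
    {τ1 τ2 : Strat (Bool ⊕ V × Fin (n + 1))} (h1 : Sim G n σ1 τ1) (h2 : Sim G n σ2 τ2)
    (hl1 : Legal (unroll G n) 0 τ1) (hl2 : Legal (unroll G n) 1 τ2)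
    (ω : ℕ → Fin 2) (c : Conf V) :
    Wins (unroll G n) τ1 τ2 ω (liftConf n 0 c) ↔ WinsBy G σ1 σ2 ω c n := by
  have hpath : ∀ k ≤ n, (∀ j < k, path G σ1 σ2 ω c j ∉ G.target) →
      path (unroll G n) τ1 τ2 ω (liftConf n 0 c) k =
        .inr (path G σ1 σ2 ω c k, Fin.ofNat (n + 1) k) := by
    intro k hk hT
    rw [path, playAux_unroll G n h1 h2 ω c k hk hT]
    rfl
  have hedge := edge_path (unroll G n) τ1 τ2 hl1 hl2 ω (liftConf n 0 c)
  constructor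
  · rintro ⟨m, hm⟩
    by_contra hno
    have hno' : ∀ j ≤ n, path G σ1 σ2 ω c j ∉ G.target :=
      fun j hj hT => hno ⟨j, hj, hT⟩
    -- Without a visit to the target the token is on `t2` from time `n + 1` on.
    have hsink : ∀ j, path (unroll G n) τ1 τ2 ω (liftConf n 0 c) (n + 1 + j) = .inl false := by
      intro j
      induction j with
      | zero =>
        have hE := hedge n
        rw [hpath n le_rfl fun j hj => hno' j hj.le] at hE
        rcases hx : path (unroll G n) τ1 τ2 ω (liftConf n 0 c) (n + 1) with (_ | _) | ⟨u, l⟩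
        · rfl
        · rw [hx] at hE
          exact absurd hE (hno' n le_rfl)
        · rw [hx] at hE
          have h3 : l.val = (Fin.ofNat (n + 1) n).val + 1 := hE.2.2
          have h4 : (Fin.ofNat (n + 1) n).val = n := Nat.mod_eq_of_lt (by omega)
          have := l.2
          omega
      | succ j ih =>
        have hE := hedge (n + 1 + j)
        rw [ih] at hE
        exact hE
    have hm' : path (unroll G n) τ1 τ2 ω (liftConf n 0 c) m = .inl true := hm
    rcases Nat.lt_or_ge n m with hnm | hnm
    · obtain ⟨j, rfl⟩ := Nat.exists_eq_add_of_le (Nat.succ_le_of_lt hnm)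
      have := hsink j
      simp_all
    · rw [hpath m hnm fun j hj => hno' j (by omega)] at hm'
      cases hm'
  · intro hW
    classical
    obtain ⟨hk, hT⟩ := Nat.find_spec hW
    have hfirst : ∀ j < Nat.find hW, path G σ1 σ2 ω c j ∉ G.target :=
      fun j hj hjT => Nat.find_min hW hj ⟨by omega, hjT⟩
    refine ⟨Nat.find hW + 1, ?_⟩
    have hE := hedge (Nat.find hW)
    rw [hpath _ hk hfirst] at hE
    rcases hx : path (unroll G n) τ1 τ2 ω (liftConf n 0 c) (Nat.find hW + 1)
      with (_ | _) | ⟨u, l⟩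
    · rw [hx] at hE
      exact absurd hT hE.1
    · rfl
    · rw [hx] at hE
      exact absurd hT hE.1

theorem val1_unroll_le (μ : Measure (ℕ → Fin 2)) (G : Game V) (n : ℕ) (c : Conf V) :
    val1 μ (unroll G n) (liftConf n 0 c) ≤ val1 μ G c := by
  refine iSup_le fun τ1 => ?_
  refine le_iSup_of_le ⟨down G n c.v τ1.1, legal_down G n c.v 0 _ τ1.2⟩ (le_iInf fun σ2 => ?_)
  refine iInf_le_of_le ⟨up G n c.v σ2.1, legal_up G n c.v 1 _ σ2.2⟩ ?_
  refine le_trans (le_of_eq ?_) (winsBy_le_pr μ G _ _ c n)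
  simp only [Pr, wins_unroll_iff G n (sim_down G n c.v 0 _ τ1.2) (sim_up G n c.v 1 _ σ2.2)
    τ1.2 (legal_up G n c.v 1 _ σ2.2)]

theorem le_val2_unroll (μ : Measure (ℕ → Fin 2)) (G : Game V) (n : ℕ) (c : Conf V) :
    (⨅ σ2 : {σ : Strat V // Legal G 1 σ}, ⨆ σ1 : {σ : Strat V // Legal G 0 σ},
      μ {ω | WinsBy G σ1.1 σ2.1 ω c n}) ≤ val2 μ (unroll G n) (liftConf n 0 c) := by
  refine le_iInf fun τ2 => ?_
  refine iInf_le_of_le ⟨down G n c.v τ2.1, legal_down G n c.v 1 _ τ2.2⟩ (iSup_le fun σ1 => ?_)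
  refine le_iSup_of_le ⟨up G n c.v σ1.1, legal_up G n c.v 0 _ σ1.2⟩ (le_of_eq ?_)
  simp only [Pr, wins_unroll_iff G n (sim_up G n c.v 0 _ σ1.2) (sim_down G n c.v 1 _ τ2.2)
    (legal_up G n c.v 0 _ σ1.2) τ2.2]

/-! ### Compactness of Player 2's strategies -/

/-- Strategies, presented as elements of a product space. -/
abbrev StratSpace (V : Type) :=
  (Hist V × Conf V → ℕ) × (Hist V × Conf V × ℕ × ℕ → V)

def StratSpace.toStrat (x : StratSpace V) : Strat V :=
  ⟨fun h c => x.1 (h, c), fun h c b1 b2 => x.2 (h, c, b1, b2)⟩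

theorem finite_range_playAux (G : Game V) (σ1 σ2 : Strat V) (c : Conf V) (k : ℕ) :
    (Set.range fun ω => playAux G σ1 σ2 ω c k).Finite := by
  induction k with
  | zero => exact (Set.finite_singleton ([], c, 0)).subset (by rintro _ ⟨ω, rfl⟩; rfl)
  | succ k ih =>
    refine ((ih.prod (Set.finite_univ (α := Fin 2))).image
      fun q => stepPlay G σ1 σ2 (fun _ => q.2) q.1).subset ?_
    rintro _ ⟨ω, rfl⟩
    exact ⟨(playAux G σ1 σ2 ω c k, ω (playAux G σ1 σ2 ω c k).2.2),
      ⟨⟨ω, rfl⟩, Set.mem_univ _⟩, rfl⟩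

theorem stepPlay_congr (G : Game V) (σ1 : Strat V) {σ2 τ2 : Strat V} (ω : ℕ → Fin 2)
    (p : Hist V × Conf V × ℕ) (hb : σ2.bid p.1 p.2.1 = τ2.bid p.1 p.2.1)
    (hm : σ2.move p.1 p.2.1 (σ1.bid p.1 p.2.1) (τ2.bid p.1 p.2.1) =
      τ2.move p.1 p.2.1 (σ1.bid p.1 p.2.1) (τ2.bid p.1 p.2.1)) :
    stepPlay G σ1 σ2 ω p = stepPlay G σ1 τ2 ω p := by
  simp only [stepPlay, hb, hm]

section Topology

open Filter Topology

variable [TopologicalSpace V] [DiscreteTopology V]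

/-- The first `k` rounds of the play are a locally constant function of Player 2's strategy,
uniformly in the outcomes of the ties. -/
theorem eventually_playAux_eq (G : Game V) (σ1 : Strat V) (c : Conf V) (x0 : StratSpace V)
    (k : ℕ) : ∀ᶠ x in 𝓝 x0, ∀ ω,
      playAux G σ1 x.toStrat ω c k = playAux G σ1 x0.toStrat ω c k := by
  induction k with
  | zero => exact Eventually.of_forall fun _ _ => rfl
  | succ k ih =>
    have hbid : ∀ q, ∀ᶠ x in 𝓝 x0, x.1 q = x0.1 q := fun q =>
      (((continuous_apply q).comp continuous_fst).continuousAt (x := x0)).eventually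
        (eventually_of_mem ((isOpen_discrete {x0.1 q}).mem_nhds rfl) fun _ h => h)
    have hmove : ∀ q, ∀ᶠ x in 𝓝 x0, x.2 q = x0.2 q := fun q =>
      (((continuous_apply q).comp continuous_snd).continuousAt (x := x0)).eventually
        (eventually_of_mem ((isOpen_discrete {x0.2 q}).mem_nhds rfl) fun _ h => h)
    have hall := (finite_range_playAux G σ1 x0.toStrat c k).eventually_all.2
      (fun p _ => (hbid (p.1, p.2.1)).and
        (hmove (p.1, p.2.1, σ1.bid p.1 p.2.1, x0.1 (p.1, p.2.1))))
    filter_upwards [ih, hall] with x hx hx' ω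
    obtain ⟨hb, hm⟩ := hx' _ ⟨ω, rfl⟩
    simp only [playAux, hx ω]
    exact stepPlay_congr G σ1 ω _ hb hm

theorem isClosed_winsBy_le (μ : Measure (ℕ → Fin 2)) (G : Game V) (σ1 : Strat V) (c : Conf V)
    (n : ℕ) (r : ENNReal) :
    IsClosed {x : StratSpace V | μ {ω | WinsBy G σ1 x.toStrat ω c n} ≤ r} := by
  refine isClosed_le (continuous_iff_continuousAt.2 fun x0 => ?_) continuous_const
  refine ContinuousAt.congr (f := fun _ => μ {ω | WinsBy G σ1 x0.toStrat ω c n})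
    continuousAt_const ?_
  have hall := (Set.finite_Iic n).eventually_all.2
    (fun k _ => eventually_playAux_eq G σ1 c x0 k)
  filter_upwards [hall] with x hx
  congr 1
  ext ω
  simp only [Set.mem_ofPred_eq, WinsBy, path]
  exact exists_congr fun k => and_congr_right fun hk => by rw [hx k hk ω]

theorem isCompact_legal [Finite V] (G : Game V) :
    IsCompact {x : StratSpace V | Legal G 1 x.toStrat} := by
  have h1 : IsCompact (Set.pi Set.univ fun q : Hist V × Conf V => Set.Iic q.2.B2) :=
    isCompact_univ_pi fun q => (Set.finite_Iic _).isCompact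
  have h2 : IsCompact
      (Set.pi Set.univ fun q : Hist V × Conf V × ℕ × ℕ => {u | G.E q.2.1.v u}) :=
    isCompact_univ_pi fun q => (Set.toFinite _).isCompact
  convert h1.prod h2 using 1
  ext x
  simp [Legal, StratSpace.toStrat, Pi.le_def]

end Topology

/-- If for every horizon Player 2 has a strategy keeping the winning probability of Player 1 at
most `r`, then by compactness a single strategy does so for all horizons. -/
theorem val2_le_of_horizons [Finite V] (μ : Measure (ℕ → Fin 2)) (G : Game V) (c : Conf V)
    (r : ENNReal)
    (h : ∀ n, ∃ σ2, Legal G 1 σ2 ∧ ∀ σ1, Legal G 0 σ1 → μ {ω | WinsBy G σ1 σ2 ω c n} ≤ r) :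
    val2 μ G c ≤ r := by
  let _ : TopologicalSpace V := ⊥
  have _ : DiscreteTopology V := ⟨rfl⟩
  let C : ℕ → Set (StratSpace V) := fun n => {x | Legal G 1 x.toStrat} ∩
    ⋂ σ1 : {σ : Strat V // Legal G 0 σ}, {x | μ {ω | WinsBy G σ1.1 x.toStrat ω c n} ≤ r}
  have hcl : ∀ n, IsClosed (⋂ σ1 : {σ : Strat V // Legal G 0 σ},
      {x : StratSpace V | μ {ω | WinsBy G σ1.1 x.toStrat ω c n} ≤ r}) :=
    fun n => isClosed_iInter fun σ1 => isClosed_winsBy_le μ G σ1.1 c n r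
  have hne : (⋂ n, C n).Nonempty := by
    apply IsCompact.nonempty_iInter_of_sequence_nonempty_isCompact_isClosed
    · rintro n x ⟨hx, hx'⟩
      refine ⟨hx, Set.mem_iInter.2 fun σ1 => le_trans (measure_mono ?_) (Set.mem_iInter.1 hx' σ1)⟩
      rintro ω ⟨k, hk, hT⟩
      exact ⟨k, hk.trans n.le_succ, hT⟩
    · intro n
      obtain ⟨σ2, hl, hw⟩ := h n
      exact ⟨(fun q => σ2.bid q.1 q.2, fun q => σ2.move q.1 q.2.1 q.2.2.1 q.2.2.2), hl,
        Set.mem_iInter.2 fun σ1 => hw σ1.1 σ1.2⟩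
    · exact (isCompact_legal G).inter_right (hcl 0)
    · exact fun n => (isCompact_legal G).isClosed.inter (hcl n)
  obtain ⟨x, hx⟩ := hne
  rw [Set.mem_iInter] at hx
  refine iInf_le_of_le ⟨x.toStrat, (hx 0).1⟩ (iSup_le fun σ1 => ?_)
  exact pr_le_of_winsBy μ G _ _ c r fun n => Set.mem_iInter.1 (hx n).2 σ1

end RBid

open RBid MeasureTheory in
/-- If every discrete reachability bidding game with
random-based tie-breaking played on a DAG is determined (`val1 = val2` at
every configuration), then every discrete reachability bidding game with
random-based tie-breaking is determined. -/
theorem stmt_11 (μ : Measure (ℕ → Fin 2)) (hμ : IsCoin μ)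
    (hdag : ∀ (V : Type) (_ : Fintype V) (G : Game V) (t1 t2 : V),
      IsDAG G t1 t2 → ∀ c : Conf V, c.B1 + c.B2 = G.N → val1 μ G c = val2 μ G c) :
    ∀ (V : Type) (_ : Fintype V) (G : Game V) (c : Conf V),
      c.B1 + c.B2 = G.N → val1 μ G c = val2 μ G c := by
  intro V _ G c hc
  apply le_antisymm
  · exact iSup_iInf_le_iInf_iSup _
  · refine le_of_forall_gt_imp_ge_of_dense fun r hr => val2_le_of_horizons μ G c r fun n => ?_
    have hlt := calc
      _ ≤ val2 μ (unroll G n) (liftConf n 0 c) := le_val2_unroll μ G n c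
      _ = val1 μ (unroll G n) (liftConf n 0 c) :=
        (hdag _ inferInstance _ _ _ (isDAG_unroll G n) _ hc).symm
      _ ≤ val1 μ G c := val1_unroll_le μ G n c
      _ < r := hr
    obtain ⟨σ2, h2⟩ := iInf_lt_iff.1 hlt
    exact ⟨σ2.1, σ2.2, fun σ1 h1 => (le_iSup_of_le ⟨σ1, h1⟩ le_rfl).trans h2.le⟩
end
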